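/- arXiv:1911.11850 — 12 statements merged into one kernel-verified Lean document; each statement's English description precedes it below -/
import Mathlib

section
/- A function ε : ℕ → ZMod 2 satisfies the Adem constraints if and only if ε is one of the following four functions: (i) ε(r) = 1 iff r = 1; (ii) ε(r) = 1 iff r ≥ 1; (iii) ε(r) = 1 iff r = 2^k − 1 for some k ≥ 1; (iv) ε(r) = 1 iff r is odd. (Equivalently: there are exactly four Dyer–Lashof algebra structures on F₂[u] compatible with the multiplication.) -/
/-- `E ε s d` is the sum over all `s`-tuples of naturals summing to `d` of the
products of the values of `ε`, in `ZMod 2`. -/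
def E (ε : ℕ → ZMod 2) (s d : ℕ) : ZMod 2 :=
  ∑ f ∈ Finset.Nat.antidiagonalTuple s d, ∏ j, ε (f j)

/-- `ε` satisfies the Adem constraints encoding the Adem relations among the
Dyer-Lashof operations on `F₂[u]` with `Q^{2r} u = ε r • u^{r+1}`. -/
def AdemConstraints (ε : ℕ → ZMod 2) : Prop :=
  ε 0 = 0 ∧ ε 1 = 1 ∧ ∀ s r : ℕ, r > 2 * s →
    ε s * E ε (s + 1) r =
      ∑ i ∈ (Finset.Icc (s + 1) (r - s - 1)).filter (fun i => r ≤ 2 * i),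
        ((Nat.choose (i - s - 1) (2 * i - r) : ZMod 2) * ε i * E ε (i + 1) (r + s - i))

/-!
Let `f = ∑ ε r X ^ r` and `g = f / X`, so that `E ε s d` is the coefficient of `X ^ d` in `f ^ s`.

Uniqueness comes from relations with a short right-hand side. Those with `s = 2` determine
everything if `ε 2 = 1`, and give `ε (2 * k) = 0` if `ε 2 = 0`. In the latter case `s = 3` gives
`ε (4 * j + 3) = ε 3 * ε (2 * j + 1)`, and `ε (4 * j + 1)` is determined by `s = 5` if `ε 3 = 1` and
vanishes by `s = 4 * j + 1` if `ε 3 = 0`. This leaves only the choice of `ε 5`.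

For existence, the Adem constraints follow from the symmetry in `a` and `b` of the double series
`f(a) f(g(a) b (a + b))`: put `a = z`, `b = β z` and compare the residues in `β` of the coefficients
divided by `(β (1 + β)) ^ (s + 1)`. One side reduces to a single term because the central binomial
coefficients are even. In the four cases `f` satisfies `f = X`, `f = X + X f`, `f = X + X f ^ 2` and
`f = X + X ^ 2 f`, and each of these equations yields a closed symmetric form of the double series.
-/

open PowerSeries

section PowerSeries

variable {R : Type*} [CommRing R] {F G : R⟦X⟧} {t : ℕ}

lemma coeff_pow_congr (h : ∀ k < t, coeff k F = coeff k G) (n : ℕ) {k : ℕ} (hk : k < t) :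
    coeff k (F ^ n) = coeff k (G ^ n) := by
  have hFG : X ^ t ∣ F - G := X_pow_dvd_iff.2 fun k hk => by rw [map_sub, h k hk, sub_self]
  have hpow := X_pow_dvd_iff.1 (hFG.trans (sub_dvd_pow_sub_pow F G n)) k hk
  rwa [map_sub, sub_eq_zero] at hpow

lemma coeff_pow_sub_coeff_pow (ht : 0 < t) (hF : constantCoeff F = 1)
    (h : ∀ k < t, coeff k F = coeff k G) (n : ℕ) :
    coeff t (F ^ n) - coeff t (G ^ n) = n * (coeff t F - coeff t G) := by
  have hG : constantCoeff G = 1 := by simpa [hF] using (h 0 ht).symm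
  obtain ⟨v, hv⟩ : X ^ t ∣ F - G :=
    X_pow_dvd_iff.2 fun k hk => by rw [map_sub, h k hk, sub_self]
  have coeff_X_pow_mul_self (H : R⟦X⟧) : coeff t (X ^ t * H) = constantCoeff H := by
    simpa using coeff_X_pow_mul H t 0
  rw [← map_sub, ← map_sub, ← geom_sum₂_mul, hv, mul_left_comm, coeff_X_pow_mul_self,
    coeff_X_pow_mul_self]
  simp [hF, hG]

lemma zmod_pow_eq_expand (p : ℕ) [hp : Fact p.Prime] (F : (ZMod p)⟦X⟧) :
    F ^ p = expand p hp.out.ne_zero F := by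
  have h := MvPowerSeries.map_frobenius_expand p hp.out.ne_zero (f := F)
  rw [ZMod.frobenius_zmod, MvPowerSeries.map_id] at h
  exact h.symm

section Subst

variable {S : Type*} [CommRing S] [Algebra R S] {a : S⟦X⟧}

lemma coeff_subst_eq_sum_range (ha : X ∣ a) (F : R⟦X⟧) {k n : ℕ} (hk : k ≤ n) :
    coeff k (F.subst a) = ∑ s ∈ Finset.range (n + 1), coeff s F • coeff k (a ^ s) := by
  rw [coeff_subst' (HasSubst.of_constantCoeff_zero' (X_dvd_iff.1 ha))]
  refine finsum_eq_sum_of_support_subset _ fun s hs => ?_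
  by_contra hsn
  rw [Finset.mem_coe, Finset.mem_range] at hsn
  exact hs (by simp [X_pow_dvd_iff.1 (pow_dvd_pow_of_dvd ha s) k (by omega)])

lemma coeff_mul_subst (ha : X ∣ a) (b : S⟦X⟧) (F : R⟦X⟧) (n : ℕ) :
    coeff n (b * F.subst a) = ∑ s ∈ Finset.range (n + 1), coeff s F • coeff n (b * a ^ s) := by
  simp only [coeff_mul, Finset.smul_sum]
  rw [Finset.sum_comm]
  refine Finset.sum_congr rfl fun ij hij => ?_
  rw [coeff_subst_eq_sum_range ha F (Finset.HasAntidiagonal.antidiagonal.snd_le hij),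
    Finset.mul_sum]
  exact Finset.sum_congr rfl fun s _ => mul_smul_comm _ _ _

lemma coeff_subst_C_mul_X (r : S) (F : R⟦X⟧) (n : ℕ) :
    coeff n (F.subst (C r * X : S⟦X⟧)) = coeff n F • r ^ n := by
  rw [coeff_subst_eq_sum_range (dvd_mul_left _ _) F le_rfl, Finset.sum_eq_single_of_mem n]
  · simp [mul_pow, ← map_pow, coeff_X_pow]
  · simp
  · intro s _ hs
    simp [mul_pow, ← map_pow, coeff_X_pow, hs.symm]

end Subst

end PowerSeries

lemma E_eq_coeff (ε : ℕ → ZMod 2) (s d : ℕ) : E ε s d = coeff d (mk ε ^ s) := by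
  rw [← Fin.prod_const, PowerSeries.coeff_prod, E]
  refine (Finset.sum_equiv Finsupp.equivFunOnFinite (fun l => ?_) fun l _ => ?_).symm
  · simp [Finset.Nat.mem_antidiagonalTuple]
  · simp

/-- The power series `g` with `f = X * g`, where `f = ∑ ε r X ^ r` and `ε 0 = 0`. -/
noncomputable def reduced {R : Type*} [Semiring R] (ε : ℕ → R) : R⟦X⟧ := mk fun n => ε (n + 1)

lemma mk_eq_X_mul_reduced {R : Type*} [Semiring R] {ε : ℕ → R} (h0 : ε 0 = 0) :
    mk ε = X * reduced ε := by
  ext n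
  cases n with
  | zero => simp [h0]
  | succ n => simp [reduced, coeff_succ_X_mul]

section GeneratingSeries

variable {ε δ : ℕ → ZMod 2} {t : ℕ}

lemma E_add_right (h0 : ε 0 = 0) (n k : ℕ) : E ε n (n + k) = coeff k (reduced ε ^ n) := by
  rw [E_eq_coeff, mk_eq_X_mul_reduced h0, mul_pow, add_comm n k, coeff_X_pow_mul]

lemma E_eq_zero_of_lt (h0 : ε 0 = 0) {n d : ℕ} (h : d < n) : E ε n d = 0 := by
  rw [E_eq_coeff, mk_eq_X_mul_reduced h0, mul_pow, coeff_X_pow_mul', if_neg (by omega)]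

lemma E_one_left (ε : ℕ → ZMod 2) (d : ℕ) : E ε 1 d = ε d := by
  rw [E_eq_coeff, pow_one, coeff_mk]

lemma E_self (h0 : ε 0 = 0) (h1 : ε 1 = 1) (n : ℕ) : E ε n n = 1 := by
  simpa [reduced, h1] using E_add_right h0 n 0

lemma E_two_mul (ε : ℕ → ZMod 2) (s d : ℕ) : E ε (2 * s) (2 * d) = E ε s d := by
  rw [E_eq_coeff, E_eq_coeff, mul_comm 2 s, pow_mul, zmod_pow_eq_expand, coeff_expand_mul]

lemma E_congr (h0 : ε 0 = 0) (h : ∀ i ≤ t, ε i = δ i) (n : ℕ) {k : ℕ} (hk : k < t) :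
    E ε n (n + k) = E δ n (n + k) := by
  have hδ : δ 0 = 0 := by rw [← h 0 (by omega), h0]
  rw [E_add_right h0, E_add_right hδ]
  exact coeff_pow_congr (t := t) (fun i hi => by simpa [reduced] using h (i + 1) hi) n hk

lemma E_sub_E (h0 : ε 0 = 0) (h1 : ε 1 = 1) (ht : 0 < t) (h : ∀ i ≤ t, ε i = δ i) (n : ℕ) :
    E ε n (n + t) - E δ n (n + t) = n * (ε (t + 1) - δ (t + 1)) := by
  have hδ : δ 0 = 0 := by rw [← h 0 (by omega), h0]
  rw [E_add_right h0, E_add_right hδ, coeff_pow_sub_coeff_pow ht (by simp [reduced, h1])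
    fun i hi => by simpa [reduced] using h (i + 1) hi]
  simp [reduced]

lemma E_single {k : ℕ} (n : ℕ) (hk : 0 < k) : E (Pi.single 1 1) n (n + k) = 0 := by
  have hreduced : reduced (Pi.single 1 1 : ℕ → ZMod 2) = 1 := by
    ext i
    simp [reduced, Pi.single_apply, coeff_one]
  rw [E_add_right (by simp), hreduced, one_pow, coeff_one, if_neg hk.ne']

lemma eq_single_of_gap (h0 : ε 0 = 0) (h1 : ε 1 = 1) (hgap : ∀ i, 1 < i → i ≤ t → ε i = 0)
    {i : ℕ} (hi : i ≤ t) : ε i = Pi.single (M := fun _ => ZMod 2) 1 1 i := by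
  rcases lt_trichotomy i 1 with hlt | rfl | hgt
  · simp [Nat.lt_one_iff.1 hlt, h0]
  · simp [h1]
  · simp [hgap i hgt hi, hgt.ne']

lemma E_eq_zero_of_gap (h0 : ε 0 = 0) (h1 : ε 1 = 1) (hgap : ∀ i, 1 < i → i ≤ t → ε i = 0)
    (n : ℕ) {k : ℕ} (hk : 0 < k) (hkt : k < t) : E ε n (n + k) = 0 := by
  rw [E_congr h0 (fun i => eq_single_of_gap h0 h1 hgap) n hkt, E_single n hk]

lemma E_eq_mul_of_gap (h0 : ε 0 = 0) (h1 : ε 1 = 1) (ht : 0 < t)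
    (hgap : ∀ i, 1 < i → i ≤ t → ε i = 0) (n : ℕ) : E ε n (n + t) = n * ε (t + 1) := by
  simpa [E_single n ht, ht.ne'] using
    E_sub_E h0 h1 ht (fun i => eq_single_of_gap h0 h1 hgap) n

end GeneratingSeries

lemma even_or_eq_four_mul_add_one_or_three (m : ℕ) : Even m ∨ ∃ j, m = 4 * j + 1 ∨ m = 4 * j + 3 :=
  (Nat.even_or_odd m).imp_right fun hm => ⟨m / 4, by grind⟩

lemma natCast_choose_self_right (p n : ℕ) [hp : Fact p.Prime] :
    ((n.choose p : ℕ) : ZMod p) = (n / p : ℕ) := by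
  have h := Choose.choose_modEq_choose_mod_mul_choose_div_nat (n := n) (k := p) (p := p)
  rw [(ZMod.natCast_eq_natCast_iff _ _ p).2 h]
  simp [Nat.div_self hp.out.pos]

namespace AdemConstraints

variable {ε δ : ℕ → ZMod 2}

/-- Only the indices `i = m + j` with `2 * j + e < s` can contribute, since `E ε (i + 1)` vanishes
in degrees at most `i`. -/
lemma eq_sum_range (h : AdemConstraints ε) {s m e N : ℕ} (hs : s < m) (he : e ≤ 1)
    (hN : s ≤ 2 * N + e) :
    ε s * E ε (s + 1) (2 * m - e) = ∑ j ∈ Finset.range N,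
      (Nat.choose (m + j - s - 1) (2 * j + e) : ZMod 2) * ε (m + j) *
        E ε (m + j + 1) (m + s - j - e) := by
  rw [h.2.2 s (2 * m - e) (by omega)]
  trans ∑ i ∈ Finset.Ico m (m + N), (Nat.choose (i - s - 1) (2 * i - (2 * m - e)) : ZMod 2) *
    ε i * E ε (i + 1) (2 * m - e + s - i)
  · apply Finset.sum_congr_of_eq_on_inter
    · intro i hi hi'
      simp only [Finset.mem_filter, Finset.mem_Icc, Finset.mem_Ico] at hi hi'
      rw [E_eq_zero_of_lt h.1 (by omega), mul_zero]
    · intro i hi hi'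
      simp only [Finset.mem_filter, Finset.mem_Icc, Finset.mem_Ico] at hi hi'
      rw [Nat.choose_eq_zero_of_lt (by omega), Nat.cast_zero, zero_mul, zero_mul]
    · intros
      rfl
  · rw [Finset.sum_Ico_eq_sum_range, Nat.add_sub_cancel_left]
    refine Finset.sum_congr rfl fun j _ => ?_
    rw [show 2 * (m + j) - (2 * m - e) = 2 * j + e by omega,
      show 2 * m - e + s - (m + j) = m + s - j - e by omega]

lemma apply_two_mul_E_two_mul (h : AdemConstraints ε) {i : ℕ} (hi : 3 ≤ i) :
    ε 2 * E ε 3 (2 * i) = ε i * ((i + 1) * ε 2) := by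
  have hE : E ε (i + 1) (i + 2) = (i + 1 : ℕ) * ε 2 :=
    E_eq_mul_of_gap h.1 h.2.1 (t := 1) (by omega) (by omega) (i + 1)
  have hrel := h.eq_sum_range (s := 2) (m := i) (e := 0) (N := 1) hi (by omega) (by omega)
  simpa [hE] using hrel

lemma apply_two_mul_E_two_mul_sub_one (h : AdemConstraints ε) {i : ℕ} (hi : 3 ≤ i) :
    ε 2 * E ε 3 (2 * i - 1) = (i - 3 : ℕ) * ε i := by
  have hrel := h.eq_sum_range (s := 2) (m := i) (e := 1) (N := 1) hi (by omega) (by omega)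
  simpa [E_self h.1 h.2.1, show i - 2 - 1 = i - 3 by omega] using hrel

lemma eq_of_apply_two_eq_one (hε : AdemConstraints ε) (hδ : AdemConstraints δ) (hε2 : ε 2 = 1)
    (hδ2 : δ 2 = 1) : ε = δ := by
  funext m
  induction m using Nat.strong_induction_on with
  | _ m ih =>
  rcases lt_or_ge m 3 with hm | hm
  · interval_cases m
    · rw [hε.1, hδ.1]
    · rw [hε.2.1, hδ.2.1]
    · rw [hε2, hδ2]
  have hE : E ε 3 (3 + (m - 1)) = E δ 3 (3 + (m - 1)) := by
    rcases Nat.even_or_odd' m with ⟨k, rfl | rfl⟩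
    · have hε' := hε.apply_two_mul_E_two_mul (i := k + 1) (by omega)
      have hδ' := hδ.apply_two_mul_E_two_mul (i := k + 1) (by omega)
      rw [hε2, one_mul] at hε'
      rw [hδ2, one_mul] at hδ'
      rw [show 3 + (2 * k - 1) = 2 * (k + 1) by omega, hε', hδ', ih (k + 1) (by omega)]
    · have hε' := hε.apply_two_mul_E_two_mul_sub_one (i := k + 2) (by omega)
      have hδ' := hδ.apply_two_mul_E_two_mul_sub_one (i := k + 2) (by omega)
      rw [hε2, one_mul] at hε'
      rw [hδ2, one_mul] at hδ'
      rw [show 3 + (2 * k + 1 - 1) = 2 * (k + 2) - 1 by omega, hε', hδ']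
      obtain rfl | hk : k = 1 ∨ 1 < k := by omega
      · simp
      · rw [ih (k + 2) (by omega)]
  have hdiff := E_sub_E hε.1 hε.2.1 (t := m - 1) (by omega) (fun i hi => ih i (by omega)) 3
  rw [hE, sub_self, Nat.sub_add_cancel (by omega), show ((3 : ℕ) : ZMod 2) = 1 by decide,
    one_mul] at hdiff
  exact sub_eq_zero.1 hdiff.symm

lemma apply_eq_zero_of_even (h : AdemConstraints ε) (h2 : ε 2 = 0) {i : ℕ} (hi : Even i) :
    ε i = 0 := by
  obtain rfl | rfl | h3 : i = 0 ∨ i = 2 ∨ 3 ≤ i := by grind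
  · exact h.1
  · exact h2
  · have hodd : ((i - 3 : ℕ) : ZMod 2) = 1 := ZMod.natCast_eq_one_iff_odd.2 (by grind)
    simpa [h2, hodd] using (h.apply_two_mul_E_two_mul_sub_one h3).symm

lemma apply_four_mul_add_three (h : AdemConstraints ε) (h2 : ε 2 = 0) (j : ℕ) :
    ε (4 * j + 3) = ε 3 * ε (2 * j + 1) := by
  rcases Nat.eq_zero_or_pos j with rfl | hj
  · simp [h.2.1]
  have hrel := h.eq_sum_range (s := 3) (m := 4 * j + 2) (e := 0) (N := 2)
    (by omega) (by omega) (by omega)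
  have hE : E ε 4 (2 * (4 * j + 2)) = ε (2 * j + 1) := by
    rw [show 2 * (4 * j + 2) = 2 * (2 * (2 * j + 1)) by ring, E_two_mul ε 2, E_two_mul ε 1,
      E_one_left]
  have hchoose : (((4 * j - 1).choose 2 : ℕ) : ZMod 2) = 1 := by
    rw [natCast_choose_self_right, ZMod.natCast_eq_one_iff_odd]
    exact ⟨j - 1, by omega⟩
  rw [Finset.sum_range_succ, Finset.sum_range_one,
    h.apply_eq_zero_of_even h2 (i := 4 * j + 2 + 0) ⟨2 * j + 1, by omega⟩,
    show 4 * j + 2 + 1 - 3 - 1 = 4 * j - 1 by omega, hchoose,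
    show 4 * j + 2 + 3 - 1 - 0 = 4 * j + 2 + 1 + 1 by omega, E_self h.1 h.2.1] at hrel
  simpa [hE] using hrel.symm

lemma apply_three_mul_apply_four_mul_add_one (h : AdemConstraints ε) (h2 : ε 2 = 0) {j : ℕ}
    (hj : 2 ≤ j) :
    ε 3 * ε (4 * j + 1) =
      ε 5 * E ε 3 (4 * j + 1) - ((4 * j - 3).choose 4 : ℕ) * ε (4 * j + 3) := by
  have hrel := h.eq_sum_range (s := 5) (m := 4 * j + 1) (e := 0) (N := 3)
    (by omega) (by omega) (by omega)
  have hE : E ε (4 * j + 1 + 1) (4 * j + 6) = ε 3 := by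
    have hgap := E_eq_mul_of_gap h.1 h.2.1 (t := 2) (by omega)
      (fun i hi hi' => by rwa [show i = 2 by omega]) (2 * j + 1)
    rw [show 4 * j + 1 + 1 = 2 * (2 * j + 1) by ring, show 4 * j + 6 = 2 * (2 * j + 1 + 2) by ring,
      E_two_mul, hgap, ZMod.natCast_eq_one_iff_odd.2 ⟨j, rfl⟩, one_mul]
  rw [Finset.sum_range_succ, Finset.sum_range_succ, Finset.sum_range_one,
    h.apply_eq_zero_of_even h2 (i := 4 * j + 1 + 1) ⟨2 * j + 1, by omega⟩,
    show 4 * j + 1 + 2 - 5 - 1 = 4 * j - 3 by omega,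
    show 4 * j + 1 + 5 - 2 - 0 = 4 * j + 1 + 2 + 1 by omega, E_self h.1 h.2.1] at hrel
  simp only [Nat.reduceAdd, tsub_zero, E_two_mul ε 3, add_zero, Nat.reduceSubDiff, mul_zero,
    Nat.choose_zero_right, Nat.cast_one, one_mul, hE, mul_one, Nat.add_one_sub_one, zero_mul,
    Nat.reduceMul] at hrel
  linear_combination -hrel

lemma eq_of_apply_three_eq_one (hε : AdemConstraints ε) (hδ : AdemConstraints δ) (hε2 : ε 2 = 0)
    (hδ2 : δ 2 = 0) (hε3 : ε 3 = 1) (hδ3 : δ 3 = 1) (h5 : ε 5 = δ 5) : ε = δ := by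
  funext m
  induction m using Nat.strong_induction_on with
  | _ m ih =>
  have hthree (j : ℕ) (hj : 2 * j + 1 < m) : ε (4 * j + 3) = δ (4 * j + 3) := by
    rw [hε.apply_four_mul_add_three hε2, hδ.apply_four_mul_add_three hδ2, hε3, hδ3, ih _ hj]
  obtain hm | ⟨j, rfl | rfl⟩ := even_or_eq_four_mul_add_one_or_three m
  · rw [hε.apply_eq_zero_of_even hε2 hm, hδ.apply_eq_zero_of_even hδ2 hm]
  · obtain rfl | rfl | hj : j = 0 ∨ j = 1 ∨ 2 ≤ j := by omega
    · rw [hε.2.1, hδ.2.1]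
    · exact h5
    · have hE : E ε 3 (4 * j + 1) = E δ 3 (4 * j + 1) := by
        rw [show 4 * j + 1 = 3 + (4 * j - 2) by omega]
        exact E_congr hε.1 (t := 4 * j) (fun i hi => ih i (by omega)) 3 (by omega)
      have hε' := hε.apply_three_mul_apply_four_mul_add_one hε2 hj
      rwa [h5, hE, hthree j (by omega), hε3, ← hδ3,
        ← hδ.apply_three_mul_apply_four_mul_add_one hδ2 hj, hδ3, one_mul, one_mul] at hε'
  · exact hthree j (by omega)

lemma apply_eq_zero_of_apply_three_eq_zero (h : AdemConstraints ε) (h2 : ε 2 = 0) (h3 : ε 3 = 0)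
    {m : ℕ} (hm : 1 < m) : ε m = 0 := by
  induction m using Nat.strong_induction_on with
  | _ m ih =>
  obtain hm | ⟨j, rfl | rfl⟩ := even_or_eq_four_mul_add_one_or_three m
  · exact h.apply_eq_zero_of_even h2 hm
  · have hgap (i : ℕ) (hi : 1 < i) (hij : i ≤ 4 * j) : ε i = 0 := ih i (by omega) hi
    have hrel := h.eq_sum_range (s := 4 * j + 1) (m := 6 * j + 1) (e := 0) (N := 2 * j + 1)
      (by omega) (by omega) (by omega)
    have hE : E ε (4 * j + 1 + 1) (2 * (6 * j + 1) - 0) = ε (4 * j + 1) := by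
      rw [show 4 * j + 1 + 1 = 2 * (2 * j + 1) by ring, Nat.sub_zero, E_two_mul,
        show 6 * j + 1 = 2 * j + 1 + 4 * j by ring, E_eq_mul_of_gap h.1 h.2.1 (by omega) hgap,
        ZMod.natCast_eq_one_iff_odd.2 ⟨j, rfl⟩, one_mul]
    rw [hE, Finset.sum_eq_zero, mul_self_eq_zero] at hrel
    · exact hrel
    intro i hi
    rw [Finset.mem_range] at hi
    obtain rfl | rfl | ⟨hi0, hij⟩ : i = 0 ∨ i = 2 * j ∨ 0 < i ∧ i < 2 * j := by omega
    · have hE0 : E ε (2 * (3 * j + 1)) (2 * (3 * j + 1 + 2 * j)) = 0 := by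
        rw [E_two_mul, E_eq_zero_of_gap h.1 h.2.1 hgap _ (by omega) (by omega)]
      rw [show 6 * j + 1 + 0 + 1 = 2 * (3 * j + 1) by ring,
        show 6 * j + 1 + (4 * j + 1) - 0 - 0 = 2 * (3 * j + 1 + 2 * j) by omega, hE0, mul_zero]
    · rw [Nat.choose_eq_zero_of_lt (by omega), Nat.cast_zero, zero_mul, zero_mul]
    · rw [show 6 * j + 1 + (4 * j + 1) - i - 0 = 6 * j + 1 + i + 1 + (4 * j - 2 * i) by omega,
        E_eq_zero_of_gap h.1 h.2.1 hgap _ (by omega) (by omega), mul_zero]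
  · rw [h.apply_four_mul_add_three h2, h3, zero_mul]

end AdemConstraints

lemma two_eq_zero_of_charTwo_algebra (R S : Type*) [CommRing R] [CharP R 2] [CommRing S]
    [Algebra R S] : (2 : S) = 0 := by
  rw [← map_ofNat (algebraMap R S) 2, CharTwo.two_eq_zero, map_zero]

section Residue

/-- The residue at `X = 0` of `F / (X * (1 - X)) ^ (s + 1)`, as a linear functional of `F`. -/
noncomputable def residue (R : Type*) [CommRing R] (s : ℕ) : R⟦X⟧ →ₗ[R] R :=
  coeff s ∘ₗ LinearMap.mulRight R (invOneSubPow R (s + 1) : R⟦X⟧)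

lemma residue_apply {R : Type*} [CommRing R] (s : ℕ) (F : R⟦X⟧) :
    residue R s F = coeff s (F * (invOneSubPow R (s + 1) : R⟦X⟧)) := rfl

lemma residue_X_mul_one_sub_X_pow {R : Type*} [CommRing R] (s j : ℕ) :
    residue R s ((X * (1 - X)) ^ j) = if j ≤ s then (Nat.centralBinom (s - j) : R) else 0 := by
  rw [residue_apply, mul_pow, mul_assoc, coeff_X_pow_mul']
  split_ifs with hj
  · rw [show s + 1 = s - j + 1 + j by omega,
      one_sub_pow_mul_invOneSubPow_val_add_eq_invOneSubPow_val,
      invOneSubPow_val_succ_eq_mk_add_choose, coeff_mk, ← two_mul, Nat.centralBinom]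
  · rfl

variable (R : Type*) [CommRing R] [CharP R 2]

lemma one_sub_X_eq_one_add_X : (1 - X : R⟦X⟧) = 1 + X := by
  linear_combination -X * two_eq_zero_of_charTwo_algebra R R⟦X⟧

lemma residue_X_mul_one_add_X_pow (s j : ℕ) :
    residue R s ((X * (1 + X)) ^ j) = if j = s then 1 else 0 := by
  rw [← one_sub_X_eq_one_add_X, residue_X_mul_one_sub_X_pow]
  rcases lt_trichotomy j s with hj | rfl | hj
  · obtain ⟨n, hn⟩ := Nat.exists_eq_add_of_lt hj
    have heven : (Nat.centralBinom (n + 1) : R) = 0 :=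
      (CharP.cast_eq_zero_iff R 2 _).2 (Nat.two_dvd_centralBinom_succ n)
    rw [if_pos hj.le, if_neg hj.ne, show s - j = n + 1 by omega, heven]
  · simp
  · rw [if_neg hj.not_ge, if_neg hj.ne']

lemma residue_X_pow_mul_one_add_X_pow {s k i : ℕ} (hi : k ≤ s → s < i) :
    residue R s (X ^ k * (1 + X) ^ i) =
      if k ≤ s then ((i - s - 1).choose (s - k) : R) else 0 := by
  rw [residue_apply, mul_assoc, coeff_X_pow_mul']
  split_ifs with hk
  · have hcancel : ((1 + X) ^ i : R⟦X⟧) * (invOneSubPow R (s + 1) : R⟦X⟧) =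
        ((1 + Polynomial.X : Polynomial R) ^ (i - s - 1) : Polynomial R) := by
      have h := one_sub_pow_add_mul_invOneSubPow_val_eq_one_sub_pow R (d := i - s - 1) (s + 1)
      rw [show i - s - 1 + (s + 1) = i by have := hi hk; omega] at h
      simpa [one_sub_X_eq_one_add_X] using h
    rw [hcancel, Polynomial.coeff_coe, Polynomial.coeff_one_add_X_pow]
  · rfl

end Residue

section DoubleSeries

/-- The double series `f(a) f(g(a) b (a + b))`, where `f = ∑ ε r X ^ r = X * g`. The Adem
constraints follow from its symmetry in `a` and `b`. -/
noncomputable def doubleSeries {R S : Type*} [CommRing R] [CommRing S] [Algebra R S] (ε : ℕ → R)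
    (a b : S⟦X⟧) : S⟦X⟧ :=
  (mk ε).subst a * (mk ε).subst ((reduced ε).subst a * b * (a + b))

variable {ε : ℕ → ZMod 2}

lemma coeff_doubleSeries {S : Type*} [CommRing S] [Algebra (ZMod 2) S] (h0 : ε 0 = 0)
    (r t : S) (n : ℕ) :
    coeff n (doubleSeries ε (C r * X) (C t * X)) = ∑ s ∈ Finset.range (n + 1),
      (ε s * E ε (s + 1) (n - s)) • (r ^ (n - 2 * s) * (t * (r + t)) ^ s) := by
  have ha : HasSubst (C r * X : S⟦X⟧) := HasSubst.of_constantCoeff_zero' (by simp)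
  have hdvd : X ∣ (reduced ε).subst (C r * X) * (C t * X) * (C r * X + C t * X) :=
    ((dvd_mul_left X (C t)).mul_left _).mul_right _
  rw [doubleSeries, coeff_mul_subst hdvd]
  refine Finset.sum_congr rfl fun s _ => ?_
  have hfactor : (mk ε).subst (C r * X) *
      ((reduced ε).subst (C r * X) * (C t * X) * (C r * X + C t * X)) ^ s =
      X ^ (2 * s + 1) * (C (r * (t * (r + t)) ^ s) *
        (reduced ε ^ (s + 1)).subst (C r * X : S⟦X⟧)) := by
    simp only [mk_eq_X_mul_reduced h0, ← coe_substAlgHom ha, map_mul, map_pow, map_add,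
      substAlgHom_X]
    rw [show substAlgHom ha (reduced ε) * (C t * X) * (C r * X + C t * X) =
      X ^ 2 * (C t * (C r + C t)) * substAlgHom ha (reduced ε) by ring,
      mul_pow, mul_pow]
    ring
  rw [hfactor, coeff_mk, coeff_X_pow_mul', coeff_C_mul, coeff_subst_C_mul_X, mul_smul]
  congr 1
  split_ifs with hsn
  · rw [← E_add_right h0, show s + 1 + (n - (2 * s + 1)) = n - s by omega,
      show n - 2 * s = n - (2 * s + 1) + 1 by omega, pow_succ,
      mul_smul_comm]
    congr 1
    ring
  · rw [E_eq_zero_of_lt h0 (by omega), zero_smul]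

lemma AdemConstraints.of_doubleSeries_comm (h0 : ε 0 = 0) (h1 : ε 1 = 1)
    (hcomm : ∀ a b : (ZMod 2)⟦X⟧⟦X⟧, X ∣ a → X ∣ b → doubleSeries ε a b = doubleSeries ε b a) :
    AdemConstraints ε := by
  refine ⟨h0, h1, fun s r hr => ?_⟩
  have hcoeff := congrArg (fun F => residue (ZMod 2) s (coeff (r + s) F))
    (hcomm (C 1 * X) (C X * X) (dvd_mul_left _ _) (dvd_mul_left _ _))
  simp only [coeff_doubleSeries h0, map_sum, map_smul, one_pow, one_mul,
    residue_X_mul_one_add_X_pow] at hcoeff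
  rw [Finset.sum_eq_single_of_mem s (by grind) fun i _ his => by rw [if_neg his, smul_zero],
    if_pos rfl, smul_eq_mul, mul_one, Nat.add_sub_cancel] at hcoeff
  have hterm (i : ℕ) : (ε i * E ε (i + 1) (r + s - i)) *
      residue (ZMod 2) s (X ^ (r + s - 2 * i) * (1 + X) ^ i) =
      if r ≤ 2 * i then
        ((i - s - 1).choose (2 * i - r) : ZMod 2) * ε i * E ε (i + 1) (r + s - i) else 0 := by
    rcases lt_or_ge (r + s) (2 * i) with hlt | hle
    · simp [E_eq_zero_of_lt h0 (show r + s - i < i + 1 by omega)]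
    · rw [residue_X_pow_mul_one_add_X_pow (ZMod 2) (by omega), mul_ite, mul_zero]
      refine if_ctx_congr (by omega) (fun _ => ?_) fun _ => rfl
      rw [show s - (r + s - 2 * i) = 2 * i - r by omega]
      ring
  simp only [add_comm X, smul_eq_mul, hterm, ← Finset.sum_filter] at hcoeff
  rw [hcoeff]
  refine (Finset.sum_subset (Finset.filter_subset_filter _ fun i hi => ?_) fun i hi hi' => ?_).symm
  · simp only [Finset.mem_Icc, Finset.mem_range] at hi ⊢
    omega
  · simp only [Finset.mem_filter, Finset.mem_Icc, Finset.mem_range] at hi hi'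
    rw [Nat.choose_eq_zero_of_lt (by omega), Nat.cast_zero, zero_mul, zero_mul]

end DoubleSeries

lemma eq_of_mul_eq_mul_of_constantCoeff {R : Type*} [CommRing R] {D F G : R⟦X⟧}
    (hD : constantCoeff D = 1) (h : D * F = D * G) : F = G :=
  (isUnit_iff_constantCoeff.2 (hD ▸ isUnit_one)).mul_left_cancel h

lemma mul_sq_add_sq_of_eq_mul_one_add_sq {A : Type*} [CommRing A] (h2 : (2 : A) = 0)
    {x y p q : A} (hp : p = x * (1 + p ^ 2)) (hq : q = y * (1 + q ^ 2)) :
    (1 + p ^ 2) * y * (x + y) * ((1 + p * q) ^ 2 + (q * (p + q)) ^ 2) =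
      q * (p + q) * (1 + p * q) := by
  have hsq : (1 + p ^ 2) * y * (x + y) * (1 + q ^ 2) ^ 2 = q * (p + q) * (1 + p * q) := calc
    _ = y * (1 + q ^ 2) * (x * (1 + p ^ 2) * (1 + q ^ 2) + y * (1 + q ^ 2) * (1 + p ^ 2)) := by
      ring
    _ = q * (p * (1 + q ^ 2) + q * (1 + p ^ 2)) := by rw [← hp, ← hq]
    _ = q * (p + q) * (1 + p * q) := by ring
  linear_combination hsq +
    (1 + p ^ 2) * y * (x + y) * (p * q + p ^ 2 * q ^ 2 + p * q ^ 3 - q ^ 2) * h2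

section Symmetry

variable {R S : Type*} [CommRing R] [CommRing S] [Algebra R S] {ε : ℕ → R} {a b : S⟦X⟧}

lemma mk_subst_eq_mul (h0 : ε 0 = 0) (ha : X ∣ a) :
    (mk ε).subst a = a * (reduced ε).subst a := by
  have ha' : HasSubst a := HasSubst.of_constantCoeff_zero' (X_dvd_iff.1 ha)
  rw [mk_eq_X_mul_reduced h0, ← coe_substAlgHom ha', map_mul, substAlgHom_X]

lemma X_dvd_mk_subst (h0 : ε 0 = 0) (ha : X ∣ a) : X ∣ (mk ε).subst a :=
  mk_subst_eq_mul h0 ha ▸ ha.mul_right _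

lemma doubleSeries_of_reduced_eq_one (h0 : ε 0 = 0) (hred : reduced ε = 1) (ha : X ∣ a)
    (hb : X ∣ b) : doubleSeries ε a b = a * b * (a + b) := by
  have hg {c : S⟦X⟧} (hc : X ∣ c) : (reduced ε).subst c = 1 := by
    rw [hred, ← coe_substAlgHom (HasSubst.of_constantCoeff_zero' (X_dvd_iff.1 hc)), map_one]
  have hY : X ∣ 1 * b * (a + b) := (hb.mul_left _).mul_right _
  rw [doubleSeries, mk_subst_eq_mul h0 ha, hg ha, mk_subst_eq_mul h0 hY, hg hY]
  ring

variable [CharP R 2]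

lemma mul_doubleSeries_of_reduced_eq_one_add_mk (h0 : ε 0 = 0) (hred : reduced ε = 1 + mk ε)
    (ha : X ∣ a) (hb : X ∣ b) :
    (1 + a ^ 2 + b ^ 2 + a * b * (1 + a + b)) * doubleSeries ε a b = a * b * (a + b) := by
  have hg {c : S⟦X⟧} (hc : X ∣ c) : (1 - c) * (reduced ε).subst c = 1 := by
    have h : (reduced ε).subst c = 1 + (mk ε).subst c := by
      simp only [hred, ← coe_substAlgHom (HasSubst.of_constantCoeff_zero' (X_dvd_iff.1 hc)),
        map_add, map_one]
    linear_combination h + mk_subst_eq_mul h0 hc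
  have hf {c : S⟦X⟧} (hc : X ∣ c) : (1 - c) * (mk ε).subst c = c := by
    linear_combination (1 - c) * mk_subst_eq_mul h0 hc + c * hg hc
  have hP := hf (c := (reduced ε).subst a * b * (a + b)) ((hb.mul_left _).mul_right _)
  have hY : (1 - a) * ((reduced ε).subst a * b * (a + b)) = b * (a + b) := by
    linear_combination b * (a + b) * hg ha
  rw [doubleSeries]
  set p := (mk ε).subst a
  set Y := (reduced ε).subst a * b * (a + b)
  set P := (mk ε).subst Y
  linear_combination (1 - a) ^ 2 * p * hP + (1 - a) * p * (P + 1) * hY + b * (a + b) * hf ha +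
    (a + a * b + b ^ 2) * p * P * two_eq_zero_of_charTwo_algebra R S⟦X⟧

lemma mul_doubleSeries_of_reduced_eq_one_add_X_mul_mk (h0 : ε 0 = 0)
    (hred : reduced ε = 1 + X * mk ε) (ha : X ∣ a) (hb : X ∣ b) :
    (1 + a ^ 4 + a ^ 2 * b ^ 2 + b ^ 4) * doubleSeries ε a b = a * b * (a + b) := by
  have hg {c : S⟦X⟧} (hc : X ∣ c) : (1 - c ^ 2) * (reduced ε).subst c = 1 := by
    have h : (reduced ε).subst c = 1 + c * (mk ε).subst c := by
      simp only [hred, ← coe_substAlgHom (HasSubst.of_constantCoeff_zero' (X_dvd_iff.1 hc)),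
        map_add, map_one, map_mul, substAlgHom_X]
    linear_combination h + c * mk_subst_eq_mul h0 hc
  have hf {c : S⟦X⟧} (hc : X ∣ c) : (1 - c ^ 2) * (mk ε).subst c = c := by
    linear_combination (1 - c ^ 2) * mk_subst_eq_mul h0 hc + c * hg hc
  have hP := hf (c := (reduced ε).subst a * b * (a + b)) ((hb.mul_left _).mul_right _)
  have hY : (1 - a ^ 2) * ((reduced ε).subst a * b * (a + b)) = b * (a + b) := by
    linear_combination b * (a + b) * hg ha
  rw [doubleSeries]
  set p := (mk ε).subst a
  set Y := (reduced ε).subst a * b * (a + b)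
  set P := (mk ε).subst Y
  linear_combination (1 - a ^ 2) ^ 2 * p * hP + b * (a + b) * hf ha +
    (((1 - a ^ 2) * Y + b * (a + b)) * p * P + (1 - a ^ 2) * p) * hY +
    (a ^ 2 + a ^ 2 * b ^ 2 + a * b ^ 3 + b ^ 4) * p * P * two_eq_zero_of_charTwo_algebra R S⟦X⟧

lemma mul_doubleSeries_of_reduced_eq_one_add_mk_sq (h0 : ε 0 = 0)
    (hred : reduced ε = 1 + mk ε ^ 2) (ha : X ∣ a) (hb : X ∣ b) :
    (1 + (mk ε).subst a * (mk ε).subst b) * doubleSeries ε a b =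
      (mk ε).subst a * (mk ε).subst b * ((mk ε).subst a + (mk ε).subst b) := by
  have h2 := two_eq_zero_of_charTwo_algebra R S⟦X⟧
  have hg {c : S⟦X⟧} (hc : X ∣ c) : (reduced ε).subst c = 1 + (mk ε).subst c ^ 2 := by
    simp only [hred, ← coe_substAlgHom (HasSubst.of_constantCoeff_zero' (X_dvd_iff.1 hc)),
      map_add, map_one, map_pow]
  have hf {c : S⟦X⟧} (hc : X ∣ c) : (mk ε).subst c = c * (1 + (mk ε).subst c ^ 2) := by
    rw [← hg hc, mk_subst_eq_mul h0 hc]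
  have hYX : X ∣ (reduced ε).subst a * b * (a + b) := (hb.mul_left _).mul_right _
  have hY : (reduced ε).subst a * b * (a + b) =
    (1 + (mk ε).subst a ^ 2) * b * (a + b) := by rw [hg ha]
  have hP := hf hYX
  rw [doubleSeries]
  set p := (mk ε).subst a
  set q := (mk ε).subst b
  set Y := (reduced ε).subst a * b * (a + b)
  set P := (mk ε).subst Y
  have hYpq : Y * ((1 + p * q) ^ 2 + (q * (p + q)) ^ 2) = q * (p + q) * (1 + p * q) :=
    hY ▸ mul_sq_add_sq_of_eq_mul_one_add_sq h2 (hf ha) (hf hb)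
  have hd : ((1 + p * q) * P - q * (p + q)) *
      (1 + p * q - Y * ((1 + p * q) * P - q * (p + q))) = 0 := by
    linear_combination (1 + p * q) ^ 2 * hP + hYpq +
      Y * ((1 + p * q) * P - q * (p + q)) * (q * (p + q)) * h2
  have hunit : IsUnit (1 + p * q - Y * ((1 + p * q) * P - q * (p + q))) := by
    have hp0 : constantCoeff p = 0 := X_dvd_iff.1 (X_dvd_mk_subst h0 ha)
    rw [isUnit_iff_constantCoeff]
    simp [hp0, X_dvd_iff.1 hYX]
  linear_combination p * hunit.mul_left_eq_zero.1 hd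

end Symmetry

section Solutions

variable {ε : ℕ → ZMod 2}

lemma eq_ite_of_eq_one_iff {x : ZMod 2} {p : Prop} [Decidable p] (h : x = 1 ↔ p) :
    x = if p then 1 else 0 := by
  split_ifs with hp
  · exact h.2 hp
  · exact not_imp_comm.1 (Fin.eq_one_of_ne_zero x) (h.not.2 hp)

lemma exists_two_mul_add_one_eq_two_pow_sub_one_iff {r : ℕ} :
    (∃ k, 1 ≤ k ∧ 2 * r + 1 = 2 ^ k - 1) ↔ r = 0 ∨ ∃ k, 1 ≤ k ∧ r = 2 ^ k - 1 := by
  constructor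
  · rintro ⟨_ | k, hk0, hk⟩
    · omega
    rw [pow_succ] at hk
    rcases Nat.eq_zero_or_pos k with rfl | hpos
    · omega
    · exact .inr ⟨k, hpos, by omega⟩
  · rintro (rfl | ⟨k, hk, rfl⟩)
    · exact ⟨1, le_rfl, rfl⟩
    · have := Nat.one_le_two_pow (n := k)
      exact ⟨k + 1, by omega, by rw [pow_succ]; omega⟩

lemma not_exists_eq_two_pow_sub_one_of_even {r : ℕ} (hr : Even r) :
    ¬∃ k, 1 ≤ k ∧ r = 2 ^ k - 1 := by
  rintro ⟨_ | k, hk, rfl⟩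
  · omega
  have := Nat.one_le_two_pow (n := k)
  grind

lemma AdemConstraints.of_iff_eq_one (hε : ∀ r, ε r = 1 ↔ r = 1) : AdemConstraints ε := by
  have hval (r : ℕ) := eq_ite_of_eq_one_iff (hε r)
  have h0 : ε 0 = 0 := hval 0
  have hred : reduced ε = 1 := by
    ext n
    simp [reduced, hval, coeff_one]
  refine AdemConstraints.of_doubleSeries_comm h0 (hval 1) fun a b ha hb => ?_
  rw [doubleSeries_of_reduced_eq_one h0 hred ha hb, doubleSeries_of_reduced_eq_one h0 hred hb ha]
  ring

lemma AdemConstraints.of_iff_one_le (hε : ∀ r, ε r = 1 ↔ 1 ≤ r) : AdemConstraints ε := by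
  have hval (r : ℕ) := eq_ite_of_eq_one_iff (hε r)
  have h0 : ε 0 = 0 := hval 0
  have hred : reduced ε = 1 + mk ε := by
    ext (_ | n) <;> simp [reduced, hval, coeff_one]
  refine AdemConstraints.of_doubleSeries_comm h0 (hval 1) fun a b ha hb => ?_
  have hab := mul_doubleSeries_of_reduced_eq_one_add_mk h0 hred ha hb
  have hba := mul_doubleSeries_of_reduced_eq_one_add_mk h0 hred hb ha
  refine eq_of_mul_eq_mul_of_constantCoeff (D := 1 + a ^ 2 + b ^ 2 + a * b * (1 + a + b)) ?_
    (by linear_combination hab - hba)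
  simp [X_dvd_iff.1 ha, X_dvd_iff.1 hb]

lemma AdemConstraints.of_iff_exists_eq_two_pow_sub_one
    (hε : ∀ r, ε r = 1 ↔ ∃ k, 1 ≤ k ∧ r = 2 ^ k - 1) :
    AdemConstraints ε := by
  classical
  have hval (r : ℕ) := eq_ite_of_eq_one_iff (hε r)
  have h0 : ε 0 = 0 := (hval 0).trans (if_neg (not_exists_eq_two_pow_sub_one_of_even Even.zero))
  have hred : reduced ε = 1 + mk ε ^ 2 := by
    ext n
    rw [zmod_pow_eq_expand, map_add, coeff_one, coeff_expand]
    rcases Nat.even_or_odd' n with ⟨r, rfl | rfl⟩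
    · rw [if_pos (dvd_mul_right 2 r), Nat.mul_div_cancel_left r two_pos]
      rcases Nat.eq_zero_or_pos r with rfl | hr
      · simpa [reduced, h0] using (hε 1).2 ⟨1, le_rfl, rfl⟩
      · simp [reduced, hval, hr.ne', exists_two_mul_add_one_eq_two_pow_sub_one_iff]
    · rw [if_neg (by omega), if_neg (by omega), add_zero, reduced, coeff_mk, hval,
        if_neg (not_exists_eq_two_pow_sub_one_of_even ⟨r + 1, by ring⟩)]
  refine AdemConstraints.of_doubleSeries_comm h0 ((hε 1).2 ⟨1, le_rfl, rfl⟩) fun a b ha hb => ?_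
  have hab := mul_doubleSeries_of_reduced_eq_one_add_mk_sq h0 hred ha hb
  have hba := mul_doubleSeries_of_reduced_eq_one_add_mk_sq h0 hred hb ha
  refine eq_of_mul_eq_mul_of_constantCoeff (D := 1 + (mk ε).subst a * (mk ε).subst b) ?_
    (by linear_combination hab - hba)
  simp [X_dvd_iff.1 (X_dvd_mk_subst h0 ha)]

lemma AdemConstraints.of_iff_odd (hε : ∀ r, ε r = 1 ↔ Odd r) : AdemConstraints ε := by
  have hval (r : ℕ) := eq_ite_of_eq_one_iff (hε r)
  have h0 : ε 0 = 0 := hval 0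
  have hred : reduced ε = 1 + X * mk ε := by
    ext (_ | n)
    · simp [reduced, hval]
    · simp [reduced, hval, coeff_one, coeff_succ_X_mul, Nat.odd_add_one, Nat.even_add_one]
  refine AdemConstraints.of_doubleSeries_comm h0 (hval 1) fun a b ha hb => ?_
  have hab := mul_doubleSeries_of_reduced_eq_one_add_X_mul_mk h0 hred ha hb
  have hba := mul_doubleSeries_of_reduced_eq_one_add_X_mul_mk h0 hred hb ha
  refine eq_of_mul_eq_mul_of_constantCoeff (D := 1 + a ^ 4 + a ^ 2 * b ^ 2 + b ^ 4) ?_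
    (by linear_combination hab - hba)
  simp [X_dvd_iff.1 ha, X_dvd_iff.1 hb]

namespace AdemConstraints

lemma apply_eq_one_iff_eq_one (h : AdemConstraints ε) (h2 : ε 2 = 0) (h3 : ε 3 = 0) (r : ℕ) :
    ε r = 1 ↔ r = 1 := by
  rcases lt_trichotomy r 1 with hr | rfl | hr
  · simp [Nat.lt_one_iff.1 hr, h.1]
  · simp [h.2.1]
  · simp [h.apply_eq_zero_of_apply_three_eq_zero h2 h3 hr, hr.ne']

lemma apply_eq_one_iff_one_le (h : AdemConstraints ε) (h2 : ε 2 = 1) (r : ℕ) :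
    ε r = 1 ↔ 1 ≤ r := by
  have hδ : AdemConstraints fun r => if 1 ≤ r then 1 else 0 :=
    AdemConstraints.of_iff_one_le (by simp [Nat.one_le_iff_ne_zero])
  simp [h.eq_of_apply_two_eq_one hδ h2 rfl, Nat.one_le_iff_ne_zero]

lemma apply_eq_one_iff_exists_eq_two_pow_sub_one (h : AdemConstraints ε) (h2 : ε 2 = 0)
    (h3 : ε 3 = 1) (h5 : ε 5 = 0) (r : ℕ) : ε r = 1 ↔ ∃ k, 1 ≤ k ∧ r = 2 ^ k - 1 := by
  classical
  let δ : ℕ → ZMod 2 := fun r => if ∃ k, 1 ≤ k ∧ r = 2 ^ k - 1 then 1 else 0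
  have hδ (r : ℕ) : δ r = 1 ↔ ∃ k, 1 ≤ k ∧ r = 2 ^ k - 1 := by simp [δ]
  have hδ2 : δ 2 = 0 := if_neg (not_exists_eq_two_pow_sub_one_of_even even_two)
  have hδ5 : δ 5 = 0 := if_neg fun hex =>
    not_exists_eq_two_pow_sub_one_of_even even_two
      ((exists_two_mul_add_one_eq_two_pow_sub_one_iff.1 hex).resolve_left two_ne_zero)
  rw [h.eq_of_apply_three_eq_one (AdemConstraints.of_iff_exists_eq_two_pow_sub_one hδ) h2 hδ2 h3
    ((hδ 3).2 ⟨2, by norm_num⟩) (h5.trans hδ5.symm), hδ]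

lemma apply_eq_one_iff_odd (h : AdemConstraints ε) (h2 : ε 2 = 0) (h3 : ε 3 = 1) (h5 : ε 5 = 1)
    (r : ℕ) : ε r = 1 ↔ Odd r := by
  have hδ : AdemConstraints fun r => if Odd r then 1 else 0 := AdemConstraints.of_iff_odd (by simp)
  simp [h.eq_of_apply_three_eq_one hδ h2 rfl h3 rfl h5]

end AdemConstraints

end Solutions

theorem stmt_0 (ε : ℕ → ZMod 2) :
    AdemConstraints ε ↔
      ((∀ r, ε r = 1 ↔ r = 1) ∨
       (∀ r, ε r = 1 ↔ 1 ≤ r) ∨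
       (∀ r, ε r = 1 ↔ ∃ k, 1 ≤ k ∧ r = 2 ^ k - 1) ∨
       (∀ r, ε r = 1 ↔ Odd r)) := by
  constructor
  · intro h
    have h01 : ∀ x : ZMod 2, x = 0 ∨ x = 1 := by decide
    rcases h01 (ε 2) with h2 | h2
    · rcases h01 (ε 3) with h3 | h3
      · exact .inl (h.apply_eq_one_iff_eq_one h2 h3)
      · rcases h01 (ε 5) with h5 | h5
        · exact .inr (.inr (.inl (h.apply_eq_one_iff_exists_eq_two_pow_sub_one h2 h3 h5)))
        · exact .inr (.inr (.inr (h.apply_eq_one_iff_odd h2 h3 h5)))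
    · exact .inr (.inl (h.apply_eq_one_iff_one_le h2))
  · rintro (hε | hε | hε | hε)
    · exact AdemConstraints.of_iff_eq_one hε
    · exact AdemConstraints.of_iff_one_le hε
    · exact AdemConstraints.of_iff_exists_eq_two_pow_sub_one hε
    · exact AdemConstraints.of_iff_odd hε
end

section
/- Let ε : ℕ → ZMod 2 satisfy the Adem constraints and let s ≥ 1. If ε(r) = 0 for every natural number r that is not congruent to 1 modulo 2^{s+1}, then ε(2^{s+1} + 1) = 0. -/
section PowerSeries

open PowerSeries

theorem coeff_two_pow_of_constantCoeff_eq_one {R : Type*} [CommSemiring R] {f : R⟦X⟧}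
    (hf : constantCoeff f = 1) (k : ℕ) :
    coeff 2 (f ^ k) = k * coeff 2 f + k.choose 2 * coeff 1 f ^ 2 := by
  induction k with
  | zero => simp [coeff_one]
  | succ k ih =>
    have hmul : coeff 2 (f ^ k * f) = coeff 2 f + k * coeff 1 f * coeff 1 f + coeff 2 (f ^ k) := by
      simp [coeff_mul, Finset.Nat.sum_antidiagonal_eq_sum_range_succ_mk, Finset.sum_range_succ,
        coeff_one_pow, hf]
    have hchoose : (k + 1).choose 2 = k + k.choose 2 := by
      rw [Nat.choose_succ_succ' k 1, Nat.choose_one_right]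
    rw [pow_succ, hmul, ih, hchoose]
    push_cast
    ring

theorem mk_eq_X_mul_expand {R : Type*} [CommRing R] {a : ℕ → R} {q : ℕ} (hq : q ≠ 0)
    (ha : ∀ r, r % q ≠ 1 → a r = 0) :
    mk a = X * expand q hq (mk fun m => a (q * m + 1)) := by
  ext n
  cases n with
  | zero => simpa using ha 0 (by simp)
  | succ n =>
    rw [coeff_succ_X_mul, coeff_mk]
    by_cases hn : q ∣ n
    · obtain ⟨m, rfl⟩ := hn
      rw [coeff_expand_mul, coeff_mk]
    · rw [coeff_expand_of_not_dvd _ _ _ hn]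
      refine ha _ fun hmod => hn (Dvd.intro ((n + 1) / q) ?_)
      have := Nat.div_add_mod (n + 1) q
      omega

theorem E_eq_coeff_mk_pow (ε : ℕ → ZMod 2) (k d : ℕ) : E ε k d = coeff d (mk ε ^ k) := by
  rw [← Fin.prod_const, coeff_prod, E]
  refine Finset.sum_equiv Finsupp.equivFunOnFinite.symm (fun f => ?_) (fun f _ => ?_)
  · simp [Finset.mem_finsuppAntidiag, Finset.Nat.mem_antidiagonalTuple]
  · simp

theorem E_mul_add_eq_coeff_mk_pow {ε : ℕ → ZMod 2} {q : ℕ} (hq : q ≠ 0)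
    (hε : ∀ r, r % q ≠ 1 → ε r = 0) (k m : ℕ) :
    E ε k (q * m + k) = coeff m ((mk fun j => ε (q * j + 1)) ^ k) := by
  rw [E_eq_coeff_mk_pow, mk_eq_X_mul_expand hq hε, mul_pow, coeff_X_pow_mul, ← map_pow,
    coeff_expand_mul]

theorem E_mul_two_add {ε : ℕ → ZMod 2} (h1 : ε 1 = 1) {q : ℕ} (hq : q ≠ 0)
    (hε : ∀ r, r % q ≠ 1 → ε r = 0) (k : ℕ) :
    E ε k (q * 2 + k) = k * ε (q * 2 + 1) + k.choose 2 * ε (q + 1) ^ 2 := by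
  rw [E_mul_add_eq_coeff_mk_pow hq hε, coeff_two_pow_of_constantCoeff_eq_one (by simp [h1])]
  simp

end PowerSeries

theorem odd_add_two_choose_two_of_four_dvd {k : ℕ} (hk : 4 ∣ k) : Odd ((k + 2).choose 2) := by
  obtain ⟨c, rfl⟩ := hk
  have hprod : (4 * c + 2) * (4 * c + 2 - 1) = (2 * c + 1) * (4 * c + 1) * 2 := by
    rw [show 4 * c + 2 - 1 = 4 * c + 1 by omega]
    ring
  rw [Nat.choose_two_right, hprod, Nat.mul_div_cancel _ two_pos]
  exact Odd.mul ⟨c, rfl⟩ ⟨2 * c, by ring⟩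

theorem E_add_two_eq_sq {ε : ℕ → ZMod 2} (h1 : ε 1 = 1) {q : ℕ} (hq : q ≠ 0) (hq4 : 4 ∣ q)
    (hε : ∀ r, r % q ≠ 1 → ε r = 0) : E ε (q + 2) (3 * q + 2) = ε (q + 1) ^ 2 := by
  have heven : ((q + 2 : ℕ) : ZMod 2) = 0 := (ZMod.natCast_eq_zero_iff _ _).2 (by omega)
  have hodd : ((q + 2).choose 2 : ZMod 2) = 1 :=
    ZMod.natCast_eq_one_iff_odd.2 (odd_add_two_choose_two_of_four_dvd hq4)
  rw [show 3 * q + 2 = q * 2 + (q + 2) by ring, E_mul_two_add h1 hq hε, heven, hodd, zero_mul,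
    zero_add, one_mul]

theorem mod_ne_one_of_add_one_lt_of_le_two_mul {i q : ℕ} (hlt : q + 1 < i)
    (hle : i ≤ 2 * q) : i % q ≠ 1 := by
  rw [Nat.mod_eq_sub_mod (by omega)]
  obtain rfl | hlt' := hle.eq_or_lt
  · simp [two_mul]
  · rw [Nat.mod_eq_of_lt (by omega)]
    omega

theorem AdemConstraints.mul_E_eq_zero {ε : ℕ → ZMod 2} (hε : AdemConstraints ε) {q : ℕ}
    (hq : q ≠ 0) (h : ∀ r, r % q ≠ 1 → ε r = 0) :
    ε (q + 1) * E ε (q + 2) (3 * q + 2) = 0 := by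
  rw [hε.2.2 (q + 1) (3 * q + 2) (by omega)]
  refine Finset.sum_eq_zero fun i hi => ?_
  rw [Finset.mem_filter, Finset.mem_Icc] at hi
  rw [h i (mod_ne_one_of_add_one_lt_of_le_two_mul (by omega) (by omega)), mul_zero, zero_mul]

theorem stmt_5_general {ε : ℕ → ZMod 2} (hε : AdemConstraints ε) {q : ℕ} (hq : q ≠ 0)
    (hq4 : 4 ∣ q) (h : ∀ r, r % q ≠ 1 → ε r = 0) : ε (q + 1) = 0 := by
  have hcube : ε (q + 1) * ε (q + 1) ^ 2 = 0 := by
    rw [← E_add_two_eq_sq hε.2.1 hq hq4 h, hε.mul_E_eq_zero hq h]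
  simpa using hcube

theorem stmt_5 (ε : ℕ → ZMod 2) (hε : AdemConstraints ε) (s : ℕ) (hs : 1 ≤ s)
    (h : ∀ r : ℕ, r % 2 ^ (s + 1) ≠ 1 → ε r = 0) : ε (2 ^ (s + 1) + 1) = 0 :=
  stmt_5_general hε (by positivity) (pow_dvd_pow 2 (Nat.succ_le_succ hs)) h
end

section
/- The function ε : ℕ → ZMod 2 defined by ε(r) = 1 if r is odd and ε(r) = 0 if r is even satisfies the Adem constraints. (Hence the corresponding rule Q^{2r}u = u^{r+1} for r odd, Q^{2r}u = 0 for r even, defines a valid Dyer–Lashof structure on F₂[u].) -/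
section PowerSeriesCoefficients

open PowerSeries

theorem sum_antidiagonalTuple_prod_eq_coeff_pow {R : Type*} [CommSemiring R]
    (f : ℕ → R) (s d : ℕ) :
    ∑ t ∈ Finset.Nat.antidiagonalTuple s d, ∏ j, f (t j) = coeff d (mk f ^ s) := by
  rw [← Fin.prod_const, coeff_prod]
  refine Finset.sum_bij' (fun t _ => Finsupp.equivFunOnFinite.symm t) (fun l _ => ⇑l)
    ?_ ?_ ?_ ?_ ?_ <;>
  simp [Finset.mem_finsuppAntidiag, Finset.Nat.mem_antidiagonalTuple]

variable (R : Type*) [CommRing R]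

theorem mk_natCast_eq_X_mul_invOneSubPow :
    mk (Nat.cast : ℕ → R) = X * (invOneSubPow R 2).val := by
  ext (_ | n)
  · simp
  · rw [coeff_succ_X_mul, invOneSubPow_val_succ_eq_mk_add_choose]
    simp [add_comm]

theorem coeff_mk_natCast_pow_succ (s d : ℕ) :
    coeff d (mk (Nat.cast : ℕ → R) ^ (s + 1)) = (s + d).choose (2 * s + 1) := by
  have invOneSubPow_two_pow :
      (invOneSubPow R 2).val ^ (s + 1) = (invOneSubPow R (2 * s + 1 + 1)).val := by
    simp only [invOneSubPow_eq_inv_one_sub_pow, ← Units.val_pow_eq_pow_val, ← pow_mul]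
    rfl
  rw [mk_natCast_eq_X_mul_invOneSubPow, mul_pow, invOneSubPow_two_pow, coeff_X_pow_mul',
    invOneSubPow_val_succ_eq_mk_add_choose]
  split_ifs with hsd
  · rw [coeff_mk]
    congr 2
    omega
  · rw [Nat.choose_eq_zero_of_lt (by omega), Nat.cast_zero]

theorem coeff_one_sub_X_pow (n k : ℕ) :
    coeff k ((1 - X : R⟦X⟧) ^ n) = (-1) ^ k * n.choose k := by
  have rescale_one_add_X : (1 - X : R⟦X⟧) =
      rescale (-1) ((1 + Polynomial.X : Polynomial R) : R⟦X⟧) := by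
    simp [sub_eq_add_neg]
  rw [rescale_one_add_X, ← map_pow, coeff_rescale, ← Polynomial.coe_pow, Polynomial.coeff_coe,
    Polynomial.coeff_one_add_X_pow]

theorem coeff_one_sub_X_add_X_sq_pow_mul_invOneSubPow {m d e : ℕ} (h : d + 2 * e ≤ 2 * m + 1) :
    coeff d ((1 - X + X ^ 2) ^ m * (invOneSubPow R e).val) =
      (-1) ^ d * ∑ c ∈ Finset.range (m + 1) with 2 * m ≤ 2 * c + d,
        ((c - e).choose (2 * c + d - 2 * m) * m.choose c : R) := by
  rw [add_pow, Finset.sum_mul, map_sum, Finset.mul_sum, Finset.sum_filter]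
  refine Finset.sum_congr rfl fun c hc => ?_
  have hcm : c ≤ m := Finset.mem_range_succ_iff.mp hc
  rw [show (1 - X) ^ c * (X ^ 2) ^ (m - c) * (m.choose c : R⟦X⟧) * (invOneSubPow R e).val =
      X ^ (2 * (m - c)) * ((1 - X) ^ c * (invOneSubPow R e).val) * C (m.choose c : R) by
    rw [map_natCast]; ring, coeff_mul_C, coeff_X_pow_mul']
  split_ifs with hle hle' hle'
  · obtain ⟨b, rfl⟩ : ∃ b, c = b + e := ⟨c - e, by omega⟩
    rw [one_sub_pow_add_mul_invOneSubPow_val_eq_one_sub_pow, coeff_one_sub_X_pow,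
      Nat.add_sub_cancel, show 2 * (b + e) + d - 2 * m = d - 2 * (m - (b + e)) by omega,
      ← mul_assoc]
    congr 2
    exact neg_one_pow_congr (by grind)
  · omega
  · omega
  · rw [zero_mul]

theorem coeff_one_sub_X_add_X_sq_pow_mul_invOneSubPow_succ (m a : ℕ) :
    coeff a ((1 - X + X ^ 2) ^ m * (invOneSubPow R (a + 1)).val) =
      ∑ k ∈ Finset.range (a + 1), ((-1) ^ k * m.choose k * (a - k).centralBinom : R) := by
  have coeff_term (k : ℕ) :
      coeff a ((-(X * (1 - X))) ^ k * 1 ^ (m - k) * (m.choose k : R⟦X⟧) *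
        (invOneSubPow R (a + 1)).val) =
      if k ≤ a then (-1) ^ k * m.choose k * ((a - k).centralBinom : R) else 0 := by
    rw [show (-(X * (1 - X))) ^ k * 1 ^ (m - k) * (m.choose k : R⟦X⟧) *
        (invOneSubPow R (a + 1)).val =
        X ^ k * ((1 - X) ^ k * (invOneSubPow R (a + 1)).val) * C ((-1) ^ k * m.choose k : R) by
      rw [map_mul, map_pow, map_neg, map_one, map_natCast, neg_pow, mul_pow]; ring,
      coeff_mul_C, coeff_X_pow_mul']
    split_ifs with hka
    · obtain ⟨b, rfl⟩ := Nat.exists_eq_add_of_le' hka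
      rw [add_right_comm, one_sub_pow_mul_invOneSubPow_val_add_eq_invOneSubPow_val,
        invOneSubPow_val_succ_eq_mk_add_choose, coeff_mk, Nat.add_sub_cancel, ← two_mul,
        Nat.centralBinom, mul_comm]
    · rw [zero_mul]
  rw [show (1 - X + X ^ 2 : R⟦X⟧) = -(X * (1 - X)) + 1 by ring, add_pow, Finset.sum_mul, map_sum]
  simp only [coeff_term]
  refine Finset.sum_congr_of_eq_on_inter ?_ ?_ ?_
  · grind
  · intro k _ hk
    rw [Nat.choose_eq_zero_of_lt (by grind), Nat.cast_zero, mul_zero, zero_mul]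
  · grind

theorem sum_choose_mul_choose_eq_sum_centralBinom {m a : ℕ} (h : 3 * a < 2 * m) :
    (-1) ^ a * ∑ c ∈ Finset.range (m + 1) with 2 * m ≤ 2 * c + a,
        ((c - (a + 1)).choose (2 * c + a - 2 * m) * m.choose c : R) =
      ∑ k ∈ Finset.range (a + 1), ((-1) ^ k * m.choose k * (a - k).centralBinom : R) := by
  rw [← coeff_one_sub_X_add_X_sq_pow_mul_invOneSubPow R (by omega),
    coeff_one_sub_X_add_X_sq_pow_mul_invOneSubPow_succ]

end PowerSeriesCoefficients

theorem sum_choose_mul_choose_zmod_two {m a : ℕ} (h : 3 * a < 2 * m) :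
    ∑ c ∈ Finset.range (m + 1) with 2 * m ≤ 2 * c + a,
        ((c - (a + 1)).choose (2 * c + a - 2 * m) * m.choose c : ZMod 2) = m.choose a := by
  have centralBinom_eq_zero {n : ℕ} (hn : n ≠ 0) : (n.centralBinom : ZMod 2) = 0 :=
    (ZMod.natCast_eq_zero_iff _ _).mpr (Nat.two_dvd_centralBinom_of_one_le (by omega))
  have key := sum_choose_mul_choose_eq_sum_centralBinom (ZMod 2) h
  simp only [ZMod.neg_eq_self_mod_two, one_pow, one_mul] at key
  rw [key, Finset.sum_range_succ, Finset.sum_eq_zero, zero_add, Nat.sub_self,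
    Nat.centralBinom_zero, Nat.cast_one, mul_one]
  intro k hk
  rw [centralBinom_eq_zero (by grind), mul_zero]

theorem natCast_choose_eq_mod_mul_div (p : ℕ) [Fact p.Prime] (n k : ℕ) :
    (n.choose k : ZMod p) = (n % p).choose (k % p) * (n / p).choose (k / p) := by
  exact_mod_cast (ZMod.natCast_eq_natCast_iff _ _ _).mpr
    Choose.choose_modEq_choose_mod_mul_choose_div_nat

theorem natCast_choose_odd_odd (n k : ℕ) :
    ((2 * n + 1).choose (2 * k + 1) : ZMod 2) = n.choose k := by
  rw [natCast_choose_eq_mod_mul_div 2]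
  simp [Nat.add_mod, show (2 * n + 1) / 2 = n by omega, show (2 * k + 1) / 2 = k by omega]

theorem natCast_choose_odd_even (n k : ℕ) :
    ((2 * n + 1).choose (2 * k) : ZMod 2) = n.choose k := by
  rw [natCast_choose_eq_mod_mul_div 2]
  simp [Nat.add_mod, show (2 * n + 1) / 2 = n by omega]

theorem natCast_choose_even_odd {n k : ℕ} (hn : Even n) (hk : Odd k) :
    (n.choose k : ZMod 2) = 0 := by
  rw [natCast_choose_eq_mod_mul_div 2, Nat.even_iff.mp hn, Nat.odd_iff.mp hk]
  simp

theorem natCast_choose_four_mul_add_three (m c : ℕ) :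
    ((4 * m + 3).choose (2 * (2 * c + 1) + 1) : ZMod 2) = m.choose c := by
  rw [show 4 * m + 3 = 2 * (2 * m + 1) + 1 by ring, natCast_choose_odd_odd,
    natCast_choose_odd_odd]

theorem natCast_mul_choose_eq_zero {n : ℕ} (hn : n % 4 ≠ 3) (i : ℕ) :
    (i * n.choose (2 * i + 1) : ZMod 2) = 0 := by
  rcases Nat.even_or_odd i with hi | hi
  · rw [hi.natCast_zmod_two, zero_mul]
  rcases Nat.even_or_odd' n with ⟨l, rfl | rfl⟩
  · rw [natCast_choose_even_odd (even_two_mul l) (odd_two_mul_add_one i), mul_zero]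
  · rw [natCast_choose_odd_odd, natCast_choose_even_odd (by grind) hi, mul_zero]

/-- The `i`-th summand on the right side of the Adem constraint at `(s, r)` for `ε = Nat.cast`, with
`E Nat.cast (i + 1) (r + s - i)` replaced by its value as a binomial coefficient. -/
def ademTerm (s r i : ℕ) : ZMod 2 :=
  (i - s - 1).choose (2 * i - r) * i * (r + s).choose (2 * i + 1)

theorem ademTerm_eq_zero_of_mod_four_ne {s r : ℕ} (h : (r + s) % 4 ≠ 3) (i : ℕ) :
    ademTerm s r i = 0 := by
  rw [ademTerm, mul_assoc, natCast_mul_choose_eq_zero h, mul_zero]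

theorem ademTerm_eq_zero_of_even {i : ℕ} (hi : Even i) (s r : ℕ) : ademTerm s r i = 0 := by
  rw [ademTerm, hi.natCast_zmod_two, mul_zero, zero_mul]

theorem ademTerm_eq_zero_of_even_of_odd {s r i : ℕ} (hs : Even s) (hr : Odd r) (hsi : s < i)
    (hri : r ≤ 2 * i) : ademTerm s r i = 0 := by
  rcases Nat.even_or_odd i with hi | hi
  · exact ademTerm_eq_zero_of_even hi s r
  · rw [ademTerm, natCast_choose_even_odd (n := i - s - 1) (by grind) (by grind), zero_mul,
      zero_mul]

theorem ademTerm_eq_zero_of_sub_lt {s r i : ℕ} (hsi : s < i) (h : r - s - 1 < i) :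
    ademTerm s r i = 0 := by
  rw [ademTerm, Nat.choose_eq_zero_of_lt (show i - s - 1 < 2 * i - r by omega), Nat.cast_zero,
    zero_mul, zero_mul]

theorem ademTerm_two_mul_add_one {a r m c : ℕ} (hm : r + (2 * a + 1) = 4 * m + 3) (hac : a < c) :
    ademTerm (2 * a + 1) r (2 * c + 1) =
      (c - (a + 1)).choose (2 * c + a - 2 * m) * m.choose c := by
  rw [ademTerm, hm, natCast_choose_four_mul_add_three, (odd_two_mul_add_one c).natCast_zmod_two,
    mul_one, show 2 * c + 1 - (2 * a + 1) - 1 = 2 * (c - (a + 1)) + 1 by omega,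
    show 2 * (2 * c + 1) - r = 2 * (2 * c + a - 2 * m) by omega, natCast_choose_odd_even]

theorem sum_ademTerm_eq_choose {a r m : ℕ} (hr : 2 * (2 * a + 1) < r)
    (hm : r + (2 * a + 1) = 4 * m + 3) :
    ∑ i ∈ Finset.Icc (2 * a + 1 + 1) (r - (2 * a + 1) - 1) with r ≤ 2 * i,
        ademTerm (2 * a + 1) r i = m.choose a := by
  have term_eq : ∀ c ∈ (Finset.range (m + 1)).filter (fun c => 2 * m ≤ 2 * c + a),
      ademTerm (2 * a + 1) r (2 * c + 1) =
        (c - (a + 1)).choose (2 * c + a - 2 * m) * m.choose c := fun c hc =>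
    ademTerm_two_mul_add_one hm (by grind)
  rw [← sum_choose_mul_choose_zmod_two (show 3 * a < 2 * m by omega),
    ← Finset.sum_congr rfl term_eq,
    ← Finset.sum_image (f := ademTerm (2 * a + 1) r) (g := fun c => 2 * c + 1)
      (fun b _ c _ h => by grind)]
  refine Finset.sum_congr_of_eq_on_inter (fun i hi hi_image => ?_) (fun i hi_image hi => ?_)
    fun _ _ _ => rfl
  · rcases Nat.even_or_odd' i with ⟨c, rfl | rfl⟩
    · exact ademTerm_eq_zero_of_even (even_two_mul c) _ _
    · have hmc : m < c := by
        by_contra! hcm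
        exact hi_image (Finset.mem_image_of_mem _ (by grind))
      rw [ademTerm_two_mul_add_one hm (by omega), Nat.choose_eq_zero_of_lt hmc, Nat.cast_zero,
        mul_zero]
  · exact ademTerm_eq_zero_of_sub_lt (by grind) (by grind)

theorem natCast_mul_choose_eq_sum_ademTerm {s r : ℕ} (hr : 2 * s < r) :
    (s * (r + s).choose (2 * s + 1) : ZMod 2) =
      ∑ i ∈ Finset.Icc (s + 1) (r - s - 1) with r ≤ 2 * i, ademTerm s r i := by
  by_cases hmod : (r + s) % 4 = 3
  · rcases Nat.even_or_odd s with hs | ⟨a, rfl⟩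
    · rw [hs.natCast_zmod_two, zero_mul, Finset.sum_eq_zero]
      intro i hi
      exact ademTerm_eq_zero_of_even_of_odd hs (by grind) (by grind) (by grind)
    · obtain ⟨m, hm⟩ : ∃ m, r + (2 * a + 1) = 4 * m + 3 := ⟨(r + (2 * a + 1)) / 4, by omega⟩
      rw [sum_ademTerm_eq_choose hr hm, hm, natCast_choose_four_mul_add_three,
        (odd_two_mul_add_one a).natCast_zmod_two, one_mul]
  · rw [natCast_mul_choose_eq_zero hmod, Finset.sum_eq_zero]
    exact fun i _ => ademTerm_eq_zero_of_mod_four_ne hmod i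

theorem E_natCast_succ (s d : ℕ) : E Nat.cast (s + 1) d = (s + d).choose (2 * s + 1) := by
  rw [E, sum_antidiagonalTuple_prod_eq_coeff_pow, coeff_mk_natCast_pow_succ]

theorem ademConstraints_natCast : AdemConstraints Nat.cast := by
  refine ⟨Nat.cast_zero, Nat.cast_one, fun s r hr => ?_⟩
  rw [E_natCast_succ, add_comm s r, natCast_mul_choose_eq_sum_ademTerm hr]
  refine Finset.sum_congr rfl fun i hi => ?_
  rw [ademTerm, E_natCast_succ, show i + (r + s - i) = r + s by grind]

theorem ite_odd_eq_natCast : (fun r => if Odd r then 1 else 0 : ℕ → ZMod 2) = Nat.cast := by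
  ext r
  split_ifs with hr
  · exact hr.natCast_zmod_two.symm
  · exact (Nat.not_odd_iff_even.mp hr).natCast_zmod_two.symm

theorem stmt_7 :
    AdemConstraints (fun r => if Odd r then 1 else 0) := by
  rw [ite_odd_eq_natCast]
  exact ademConstraints_natCast
end

section
/- For every natural number q ≥ 0, the binomial coefficient C(3q+2, 2q+1) is even. -/
/-!
By Lucas' theorem, deleting a common last base-`p` digit of `n` and `k` does not change `C(n, k)`
modulo `p`. If `q = 2r + 1`, both `3q + 2` and `2q + 1` end in the binary digit `1`, and deleting it
leaves `3r + 2` and `2r + 1`, the same pair for a smaller index. If `q` is even, then `n = 3q + 2`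
is even and `k = 2q + 1` is odd, so `k C(n, k) = n C(n - 1, k - 1)` forces `C(n, k)` to be even.
-/

theorem dvd_choose_of_dvd_of_coprime {d n k : ℕ} (hn : d ∣ n) (hk : d.Coprime k) :
    d ∣ n.choose k := by
  rcases k with _ | k
  · rw [(Nat.coprime_zero_right d).mp hk]
    exact one_dvd _
  rcases n with _ | n
  · rw [Nat.choose_zero_succ]
    exact dvd_zero d
  refine hk.dvd_of_dvd_mul_right ?_
  rw [← Nat.add_one_mul_choose_eq]
  exact hn.mul_right _

theorem choose_mul_add_mul_add_modEq {p r : ℕ} [Fact p.Prime] (hr : r < p) (n k : ℕ) :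
    (p * n + r).choose (p * k + r) ≡ n.choose k [MOD p] := by
  have lucas := Choose.choose_modEq_choose_mod_mul_choose_div_nat
    (p := p) (n := p * n + r) (k := p * k + r)
  have mod_eq (m : ℕ) : (p * m + r) % p = r := by
    rw [Nat.mul_add_mod, Nat.mod_eq_of_lt hr]
  have div_eq (m : ℕ) : (p * m + r) / p = m := by
    rw [Nat.mul_add_div (Nat.zero_lt_of_lt hr), Nat.div_eq_of_lt hr, add_zero]
  rwa [mod_eq, mod_eq, div_eq, div_eq, Nat.choose_self, one_mul] at lucas

theorem stmt_9 (q : ℕ) : Even (Nat.choose (3 * q + 2) (2 * q + 1)) := by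
  induction q using Nat.evenOddRec with
  | h0 => decide
  | h_even r _ =>
    have top_even : 2 ∣ 3 * (2 * r) + 2 := by lia
    have bottom_odd : Odd (2 * (2 * r) + 1) := odd_two_mul_add_one _
    exact even_iff_two_dvd.mpr (dvd_choose_of_dvd_of_coprime top_even bottom_odd.coprime_two_left)
  | h_odd r ih =>
    have top_eq : 3 * (2 * r + 1) + 2 = 2 * (3 * r + 2) + 1 := by ring
    have delete_last_digit := choose_mul_add_mul_add_modEq one_lt_two (3 * r + 2) (2 * r + 1)
    rw [top_eq, Nat.even_iff, delete_last_digit]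
    exact Nat.even_iff.mp ih
end

section
/- For every natural number q ≥ 0, the binomial coefficient C(3q+5, 2q+3) is even. -/
theorem choose_succ_eq_mul_choose {n k m : ℕ} (h : n = k + m * (k + 1)) :
    n.choose (k + 1) = m * n.choose k := by
  have sub_eq : n - k = m * (k + 1) := Nat.sub_eq_of_eq_add' h
  refine Nat.eq_of_mul_eq_mul_right k.succ_pos ?_
  calc n.choose (k + 1) * (k + 1)
      = n.choose k * (n - k) := Nat.choose_succ_right_eq n k
    _ = m * n.choose k * (k + 1) := by rw [sub_eq]; ring

theorem stmt_10 (q : ℕ) : Even (Nat.choose (3 * q + 5) (2 * q + 3)) := by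
  refine even_iff_exists_two_mul.mpr ⟨(3 * q + 5).choose (q + 1), ?_⟩
  calc (3 * q + 5).choose (2 * q + 3)
      = (3 * q + 5).choose (q + 2) := Nat.choose_symm_of_eq_add (by lia)
    _ = 2 * (3 * q + 5).choose (q + 1) := choose_succ_eq_mul_choose (by lia)
end

section
/- For every natural number q ≥ 1, the sum C(3q+2, 2q+5) + C(3q+2, 2q+3) + C(3q+2, 2q−1) is even. -/
/-!
By Lucas' theorem at the prime 2, all three terms are even when `q` is even, and the sum for
`q = 2m + 1` has the parity of `C(3m+2, 2m+3) + C(3m+2, 2m+2) + C(3m+2, 2m)`. A second application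
and Pascal's rule, with `k = ⌊m/2⌋`, leave the parity of `C(3k+2, 2k+1) = 2 * C(3k+2, k)`.
-/

lemma prime_dvd_choose_mul_add_iff {p : ℕ} (hp : p.Prime) (a b : ℕ) {i j : ℕ}
    (hi : i < p) (hj : j < p) :
    p ∣ (p * a + i).choose (p * b + j) ↔ i < j ∨ p ∣ a.choose b := by
  have : Fact p.Prime := ⟨hp⟩
  have lucas : (p * a + i).choose (p * b + j) ≡ i.choose j * a.choose b [MOD p] := by
    simpa [Nat.mul_add_mod, Nat.mod_eq_of_lt, Nat.mul_add_div hp.pos, Nat.div_eq_of_lt, hi, hj]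
      using Choose.choose_modEq_choose_mod_mul_choose_div_nat
        (n := p * a + i) (k := p * b + j) (p := p)
  have dvd_digit_iff : p ∣ i.choose j ↔ i < j := by
    refine ⟨fun hdvd => ?_, fun hij => by simp [Nat.choose_eq_zero_of_lt hij]⟩
    by_contra! hji
    exact hp.coprime_iff_not_dvd.mp (hp.coprime_choose_of_lt hi hji) hdvd
  rw [lucas.dvd_iff dvd_rfl, hp.dvd_mul, dvd_digit_iff]

section Parity

variable (a b : ℕ)

lemma even_choose_two_mul_two_mul_iff : Even ((2 * a).choose (2 * b)) ↔ Even (a.choose b) := by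
  simpa [even_iff_two_dvd] using
    prime_dvd_choose_mul_add_iff Nat.prime_two a b (i := 0) (j := 0) two_pos two_pos

lemma even_choose_two_mul_two_mul_add_one : Even ((2 * a).choose (2 * b + 1)) := by
  simpa [even_iff_two_dvd] using
    prime_dvd_choose_mul_add_iff Nat.prime_two a b (i := 0) (j := 1) two_pos one_lt_two

lemma even_choose_two_mul_add_one_two_mul_iff :
    Even ((2 * a + 1).choose (2 * b)) ↔ Even (a.choose b) := by
  simpa [even_iff_two_dvd] using
    prime_dvd_choose_mul_add_iff Nat.prime_two a b (i := 1) (j := 0) one_lt_two two_pos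

lemma even_choose_two_mul_add_one_two_mul_add_one_iff :
    Even ((2 * a + 1).choose (2 * b + 1)) ↔ Even (a.choose b) := by
  simpa [even_iff_two_dvd] using
    prime_dvd_choose_mul_add_iff Nat.prime_two a b (i := 1) (j := 1) one_lt_two one_lt_two

end Parity

lemma add_one_mul_add_choose_add_one (r k : ℕ) :
    ((r + 1) * k + r).choose (k + 1) = r * ((r + 1) * k + r).choose k := by
  have ratio := Nat.choose_succ_right_eq ((r + 1) * k + r) k
  rw [Nat.sub_eq_of_eq_add (show (r + 1) * k + r = r * (k + 1) + k by ring)] at ratio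
  apply Nat.eq_of_mul_eq_mul_right k.succ_pos
  linarith

lemma even_choose_three_mul_add_two_two_mul_add_one (k : ℕ) :
    Even ((3 * k + 2).choose (2 * k + 1)) := by
  rw [Nat.choose_symm_of_eq_add (show 3 * k + 2 = (2 * k + 1) + (k + 1) by ring),
    add_one_mul_add_choose_add_one 2 k]
  exact even_two_mul _

lemma even_sum_choose_three_mul_add_two (m : ℕ) :
    Even ((3 * m + 2).choose (2 * m + 3) + (3 * m + 2).choose (2 * m + 2) +
      (3 * m + 2).choose (2 * m)) := by
  obtain ⟨k, rfl | rfl⟩ := m.even_or_odd'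
  · have pascal : Even ((3 * k + 1).choose (2 * k) + (3 * k + 1).choose (2 * k + 1)) :=
      even_choose_three_mul_add_two_two_mul_add_one k
    rw [show 3 * (2 * k) + 2 = 2 * (3 * k + 1) by ring,
      show 2 * (2 * k) + 3 = 2 * (2 * k + 1) + 1 by ring,
      show 2 * (2 * k) + 2 = 2 * (2 * k + 1) by ring, add_assoc]
    refine (even_choose_two_mul_two_mul_add_one _ _).add ?_
    rw [add_comm]
    simpa only [Nat.even_add, even_choose_two_mul_two_mul_iff] using pascal
  · rw [show 3 * (2 * k + 1) + 2 = 2 * (3 * k + 2) + 1 by ring,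
      show 2 * (2 * k + 1) + 3 = 2 * (2 * k + 2) + 1 by ring,
      show 2 * (2 * k + 1) + 2 = 2 * (2 * k + 2) by ring]
    refine Even.add ?_ ?_
    · rw [Nat.even_add, even_choose_two_mul_add_one_two_mul_add_one_iff,
        even_choose_two_mul_add_one_two_mul_iff]
    · rw [even_choose_two_mul_add_one_two_mul_iff]
      exact even_choose_three_mul_add_two_two_mul_add_one k

theorem stmt_11 (q : ℕ) (hq : 1 ≤ q) :
    Even (Nat.choose (3 * q + 2) (2 * q + 5) + Nat.choose (3 * q + 2) (2 * q + 3) +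
      Nat.choose (3 * q + 2) (2 * q - 1)) := by
  obtain ⟨m, rfl | rfl⟩ := q.even_or_odd'
  · rw [show 3 * (2 * m) + 2 = 2 * (3 * m + 1) by ring,
      show 2 * (2 * m) + 5 = 2 * (2 * m + 2) + 1 by ring,
      show 2 * (2 * m) + 3 = 2 * (2 * m + 1) + 1 by ring,
      show 2 * (2 * m) - 1 = 2 * (2 * m - 1) + 1 by omega]
    exact ((even_choose_two_mul_two_mul_add_one _ _).add
      (even_choose_two_mul_two_mul_add_one _ _)).add (even_choose_two_mul_two_mul_add_one _ _)
  · rw [show 3 * (2 * m + 1) + 2 = 2 * (3 * m + 2) + 1 by ring,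
      show 2 * (2 * m + 1) + 5 = 2 * (2 * m + 3) + 1 by ring,
      show 2 * (2 * m + 1) + 3 = 2 * (2 * m + 2) + 1 by ring,
      show 2 * (2 * m + 1) - 1 = 2 * (2 * m) + 1 by omega]
    simpa only [Nat.even_add, even_choose_two_mul_add_one_two_mul_add_one_iff]
      using even_sum_choose_three_mul_add_two m
end

section
/- For all natural numbers n ≥ 0 and q ≥ 2, the congruence C(n+3q, 2q−1) ≡ C(n+3q−2, 2q−1) + C(n+3q−2, 2q−3) holds modulo 2. (In the paper's notation: b_{n,q} ≡ b_{n−2,q} + b_{n+1,q−1} mod 2, where b_{n,q} = C(n+3q, 2q−1).) -/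
open Polynomial in
theorem choose_add_prime_pow_modEq {p : ℕ} (hp : p.Prime) (e m k : ℕ) :
    (m + p ^ e).choose (k + p ^ e) ≡ m.choose (k + p ^ e) + m.choose k [MOD p] := by
  have : Fact p.Prime := ⟨hp⟩
  have frobenius : (X + 1 : (ZMod p)[X]) ^ (m + p ^ e) =
      (X + 1) ^ m + (X + 1) ^ m * X ^ p ^ e := by
    rw [pow_add, add_pow_char_pow, one_pow, mul_add_one, add_comm]
  rw [← ZMod.natCast_eq_natCast_iff, Nat.cast_add]
  simpa only [coeff_add, coeff_mul_X_pow, coeff_X_add_one_pow] using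
    congrArg (coeff · (k + p ^ e)) frobenius

theorem stmt_12 (n q : ℕ) (hq : 2 ≤ q) :
    Nat.choose (n + 3 * q) (2 * q - 1) ≡
      Nat.choose (n + 3 * q - 2) (2 * q - 1) + Nat.choose (n + 3 * q - 2) (2 * q - 3)
        [MOD 2] := by
  have upper : n + 3 * q - 2 + 2 ^ 1 = n + 3 * q := by lia
  have lower : 2 * q - 3 + 2 ^ 1 = 2 * q - 1 := by lia
  simpa only [upper, lower] using
    choose_add_prime_pow_modEq Nat.prime_two 1 (n + 3 * q - 2) (2 * q - 3)
end

section
/- Let ε : ℕ → ZMod 2, let s ≥ 1 and d be natural numbers, and let T be the set of indices i such that the i-th binary digit of s equals 1 (so s = Σ_{i ∈ T} 2^i). Then, in ZMod 2, the sum over all s-tuples (i₁, …, i_s) of natural numbers with i₁ + ⋯ + i_s = d of the products ε(i₁)⋯ε(i_s) equals the sum over all families (a_i)_{i ∈ T} of natural numbers satisfying Σ_{i ∈ T} a_i · 2^i = d of the products Π_{i ∈ T} ε(a_i). -/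
/-!
Let `F = ∑ ε(n) Xⁿ`. The sum over tuples is the coefficient of `X ^ d` in `F ^ s`. If
`s = ∑ i, p ^ e i` in exponential characteristic `p`, then `F ^ s = ∏ i, F ^ p ^ e i`, and the
iterated Frobenius turns `F ^ p ^ e i` into `∑ ε(n) ^ p ^ e i * X ^ (n * p ^ e i)`, so the same
coefficient is a sum over families `a` with `∑ i, a i * p ^ e i = d`. Over `ZMod 2` the powers
`ε(n) ^ 2 ^ k` collapse to `ε(n)`.
-/

open Finset PowerSeries

theorem le_of_sum_mul_eq {ι : Type*} [Fintype ι] {w a : ι → ℕ} {d : ℕ}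
    (h : ∑ i, a i * w i = d) {i : ι} (hw : w i ≠ 0) : a i ≤ d :=
  calc
    a i ≤ a i * w i := Nat.le_mul_of_pos_right _ (Nat.pos_of_ne_zero hw)
    _ ≤ ∑ i, a i * w i :=
      single_le_sum (f := fun i ↦ a i * w i) (fun _ _ ↦ Nat.zero_le _) (mem_univ i)
    _ = d := h

theorem coeff_prod_univ {ι R : Type*} [Fintype ι] [DecidableEq ι] [CommSemiring R]
    (F : ι → R⟦X⟧) (d : ℕ) :
    coeff d (∏ i, F i) = ∑ f ∈ piAntidiag univ d, ∏ i, coeff (f i) (F i) := by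
  rw [coeff_prod]
  exact sum_equiv Finsupp.equivFunOnFinite (by simp) fun _ _ ↦ rfl

theorem coeff_pow_eq_sum_antidiagonalTuple {R : Type*} [CommSemiring R] (F : R⟦X⟧) (s d : ℕ) :
    coeff d (F ^ s) = ∑ f ∈ Nat.antidiagonalTuple s d, ∏ j, coeff (f j) F := by
  rw [← piAntidiag_univ_fin_eq_antidiagonalTuple, ← coeff_prod_univ, Fin.prod_const]

theorem coeff_prod_expand {ι R : Type*} [Fintype ι] [DecidableEq ι] [CommRing R]
    (F : ι → R⟦X⟧) {w : ι → ℕ} (hw : ∀ i, w i ≠ 0) (d : ℕ) :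
    coeff d (∏ i, expand (w i) (hw i) (F i)) =
      ∑ a ∈ Fintype.piFinset (fun _ : ι ↦ range (d + 1)) with ∑ i, a i * w i = d,
        ∏ i, coeff (a i) (F i) := by
  have h_coeff (f : ι → ℕ) : ∏ i, coeff (f i) (expand (w i) (hw i) (F i)) =
      if ∀ i, w i ∣ f i then ∏ i, coeff (f i / w i) (F i) else 0 := by
    simp [coeff_expand, prod_ite_zero]
  simp_rw [coeff_prod_univ, h_coeff, ← sum_filter]
  refine sum_nbij' (fun f i ↦ f i / w i) (fun a i ↦ a i * w i) ?_ ?_ ?_ ?_ fun _ _ ↦ rfl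
  · intro f hf
    simp only [mem_filter, mem_piAntidiag, mem_univ, implies_true, and_true] at hf
    have h_sum : ∑ i, f i / w i * w i = d := by simpa only [Nat.div_mul_cancel (hf.2 _)] using hf.1
    simpa [h_sum, Nat.lt_succ_iff] using fun i ↦ le_of_sum_mul_eq h_sum (hw i)
  · intro a ha
    simpa using (mem_filter.mp ha).2
  · intro f hf
    exact funext fun i ↦ Nat.div_mul_cancel ((mem_filter.mp hf).2 i)
  · intro a _
    exact funext fun i ↦ Nat.mul_div_cancel (a i) (Nat.pos_of_ne_zero (hw i))

theorem pow_expChar_pow_eq_expand_map_iterateFrobenius {R : Type*} [CommRing R] (p : ℕ)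
    [ExpChar R p] (F : R⟦X⟧) (k : ℕ) :
    F ^ p ^ k =
      expand (p ^ k) (pow_ne_zero k (expChar_ne_zero R p)) (map (iterateFrobenius R p k) F) := by
  rw [← map_expand]
  exact (MvPowerSeries.map_iterateFrobenius_expand p (expChar_ne_zero R p) F k).symm

theorem sum_two_pow_eq_of_mem_iff_testBit {s : ℕ} {T : Finset ℕ}
    (hT : ∀ i, i ∈ T ↔ s.testBit i) : ∑ i ∈ T, 2 ^ i = s := by
  have hT_eq : T = s.bitIndices.toFinset := by
    ext i
    rw [hT, List.mem_toFinset, Nat.mem_bitIndices]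
  rw [hT_eq, sum_toFinset_bitIndices_two_pow]

theorem stmt_13_general {ι R : Type*} [Fintype ι] [DecidableEq ι] [CommRing R] (p : ℕ)
    [ExpChar R p] (ε : ℕ → R) (e : ι → ℕ) (d : ℕ) :
    ∑ f ∈ Nat.antidiagonalTuple (∑ i, p ^ e i) d, ∏ j, ε (f j) =
      ∑ a ∈ Fintype.piFinset (fun _ : ι ↦ range (d + 1)) with ∑ i, a i * p ^ e i = d,
        ∏ i, ε (a i) ^ p ^ e i := by
  have hp (i : ι) : p ^ e i ≠ 0 := pow_ne_zero _ (expChar_ne_zero R p)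
  calc
    _ = coeff d (mk ε ^ ∑ i, p ^ e i) := by
      simp only [coeff_pow_eq_sum_antidiagonalTuple, coeff_mk]
    _ = coeff d (∏ i, expand (p ^ e i) (hp i) (map (iterateFrobenius R p (e i)) (mk ε))) := by
      simp only [← pow_expChar_pow_eq_expand_map_iterateFrobenius, prod_pow_eq_pow_sum]
    _ = _ := by
      simp only [coeff_prod_expand, coeff_map, coeff_mk, iterateFrobenius_def]

theorem stmt_13 (ε : ℕ → ZMod 2) (s d : ℕ) (hs : 1 ≤ s) (T : Finset ℕ)
    (hT : ∀ i, i ∈ T ↔ s.testBit i) :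
    (∑ f ∈ Finset.Nat.antidiagonalTuple s d, ∏ j, ε (f j)) =
      ∑ a ∈ (Fintype.piFinset (fun _ : T => Finset.range (d + 1))).filter
          (fun a => ∑ i : T, a i * 2 ^ (i : ℕ) = d),
        ∏ i : T, ε (a i) := by
  rw [← sum_two_pow_eq_of_mem_iff_testBit hT, ← sum_coe_sort T]
  simpa only [ZMod.pow_card_pow] using stmt_13_general 2 ε (fun i : T ↦ (i : ℕ)) d
end

section
/- Fix a prime p and a natural number s ≥ 3. For every vector v : Fin s → ZMod p, the signed sum Σ_{b ∈ B_s} Σ_{σ ∈ Perm(Fin s)} sign(σ) • [(b · P_σ)ᵀ v] equals 0 in the free abelian group on the set of vectors Fin s → ZMod p. (This is the vanishing of the Steinberg idempotent applied to any character of (F_p)^s, which computes K⁰M(s) = 0 for s ≥ 3.) -/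
open scoped Classical

/-!
Write `F w = ∑ σ, sign σ • [w ∘ σ]`, so that the sum in question is `∑ b, F (v b)`. Collecting the
`b` with the same value of `v b` turns it into `∑ w, N w • F w`, where `N w` counts the `b ∈ B` with
`v b = w`. The function `F` changes sign when two coordinates of `w` are swapped; in particular it
vanishes unless the entries of `w` are distinct. The count `N` is constant on the orbits of `B`.

Take indices `z < x < y` and let `τ` swap the coordinates `x` and `y`. If the entries of `w` are
distinct, then `w` and `w ∘ τ` lie in the same orbit of `B`: two vectors do as soon as they are both
nonzero at some index `k` and agree at all earlier ones, and here `k` can be `z` if `w z ≠ 0`, and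
`x` otherwise. Hence substituting `w ∘ τ` for `w` negates `∑ w, N w • F w`.
-/

open Matrix Equiv

section SignedSum

variable {n α : Type*} [Fintype n] [DecidableEq n]

/-- The signed sum `∑ σ, sign σ • [w ∘ σ]` of all rearrangements of a vector `w`, in the free
abelian group on vectors. -/
noncomputable def signedSum (w : n → α) : (n → α) →₀ ℤ :=
  ∑ σ : Perm n, (Perm.sign σ : ℤ) • Finsupp.single (w ∘ σ) 1

lemma signedSum_comp_perm (w : n → α) (τ : Perm n) :
    signedSum (w ∘ τ) = (Perm.sign τ : ℤ) • signedSum w := by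
  rw [signedSum, signedSum, Finset.smul_sum]
  refine Fintype.sum_equiv (Equiv.mulLeft τ) _ _ fun σ => ?_
  have hsign : (Perm.sign σ : ℤ) = Perm.sign τ * Perm.sign (τ * σ) := by
    rw [Perm.sign_mul, Units.val_mul, ← mul_assoc, Int.units_coe_mul_self, one_mul]
  rw [Equiv.coe_mulLeft, smul_smul, ← hsign, Perm.coe_mul, Function.comp_assoc]

lemma signedSum_comp_swap (w : n → α) {i j : n} (hij : i ≠ j) :
    signedSum (w ∘ swap i j) = -signedSum w := by
  simp [signedSum_comp_perm, Perm.sign_swap hij]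

lemma sum_sign_smul_single_vecMul_permMatrix {R : Type*} [CommRing R] (w : n → R) :
    ∑ σ : Perm n, (Perm.sign σ : ℤ) • Finsupp.single (w ᵥ* σ.permMatrix R) (1 : ℤ) =
      signedSum w :=
  Fintype.sum_equiv (Equiv.inv (Perm n)) _ _ fun σ => by
    rw [vecMul_permMatrix, Equiv.inv_apply, Perm.sign_inv, Perm.inv_def]

end SignedSum

lemma eq_zero_of_comp_swap_eq_neg {n α A : Type*} [DecidableEq n] [AddGroup A]
    [IsAddTorsionFree A] {F : (n → α) → A} {w : n → α}
    (hF : ∀ i j, i ≠ j → F (w ∘ swap i j) = -F w) (hw : ¬ Function.Injective w) : F w = 0 := by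
  obtain ⟨i, j, hwij, hij⟩ := Function.not_injective_iff.mp hw
  have hswap : w ∘ swap i j = w := by
    rw [comp_swap_eq_update, hwij, Function.update_eq_self, ← hwij, Function.update_eq_self]
  exact self_eq_neg.mp ((congrArg F hswap).symm.trans (hF i j hij))

section Orbits

variable {K n : Type*} [Field K] [Fintype n] [LinearOrder n]

lemma exists_isUnit_isUpperTriangular_vecMul_eq {w w' : n → K} {k : n} (hwk : w k ≠ 0)
    (hwk' : w' k ≠ 0) (hlt : ∀ i < k, w' i = w i) :
    ∃ u : Matrix n n K, IsUnit u ∧ u.IsUpperTriangular ∧ w ᵥ* u = w' := by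
  let u : Matrix n n K := 1 + vecMulVec (Pi.single k 1) ((w k)⁻¹ • (w' - w))
  have hu : u.IsUpperTriangular := by
    refine blockTriangular_one.add fun i j (hji : j < i) => ?_
    obtain rfl | hik := eq_or_ne i k
    · simp [vecMulVec_apply, hlt j hji]
    · simp [vecMulVec_apply, hik]
  refine ⟨u, ?_, hu, ?_⟩
  · rw [isUnit_iff_isUnit_det, isUnit_iff_ne_zero, det_of_isUpperTriangular hu,
      Finset.prod_ne_zero_iff]
    intro i _
    obtain rfl | hik := eq_or_ne i k
    · simp [u, vecMulVec_apply, mul_sub, hwk, hwk']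
    · simp [u, vecMulVec_apply, hik]
  · rw [vecMul_add, vecMul_one, vecMul_vecMulVec, dotProduct_single_one,
      smul_inv_smul₀ hwk, add_sub_cancel]

lemma exists_isUnit_isUpperTriangular_vecMul_eq_comp_swap {z x y : n} (hzx : z < x) (hxy : x < y)
    {w : n → K} (hw : Function.Injective w) :
    ∃ u : Matrix n n K, IsUnit u ∧ u.IsUpperTriangular ∧ w ᵥ* u = w ∘ swap x y := by
  have hfix : ∀ i < x, (w ∘ swap x y) i = w i := fun i hi =>
    congrArg w (swap_apply_of_ne_of_ne hi.ne (hi.trans hxy).ne)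
  by_cases hz : w z = 0
  · have hne_zero : ∀ i, z < i → w i ≠ 0 := fun i hi => hz ▸ hw.ne hi.ne'
    refine exists_isUnit_isUpperTriangular_vecMul_eq (hne_zero x hzx) ?_ hfix
    simpa using hne_zero y (hzx.trans hxy)
  · exact exists_isUnit_isUpperTriangular_vecMul_eq hz (by rwa [hfix z hzx])
      fun i hi => hfix i (hi.trans hzx)

end Orbits

section Borel

variable {R n : Type*} [Semiring R] [Fintype R] [Fintype n] [LinearOrder n]

variable (R n) in
/-- The group `B` of invertible upper triangular matrices over a finite semiring, encoded as a
`Finset` of matrices in order to sum over it. -/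
noncomputable def borelFinset : Finset (Matrix n n R) :=
  {b | IsUnit b ∧ b.IsUpperTriangular}

lemma mem_borelFinset {b : Matrix n n R} :
    b ∈ borelFinset R n ↔ IsUnit b ∧ b.IsUpperTriangular := by
  simp [borelFinset]

lemma mul_mem_borelFinset {b u : Matrix n n R} (hb : b ∈ borelFinset R n)
    (hu : u ∈ borelFinset R n) : b * u ∈ borelFinset R n := by
  rw [mem_borelFinset] at *
  exact ⟨hb.1.mul hu.1, hb.2.mul hu.2⟩

/-- The number of invertible upper triangular matrices `b` with `v b = w`. -/
noncomputable def borelFiberCard (v w : n → R) : ℕ := {b ∈ borelFinset R n | v ᵥ* b = w}.card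

lemma borelFiberCard_le_borelFiberCard_vecMul (v w : n → R) {u : Matrix n n R}
    (hu : u ∈ borelFinset R n) : borelFiberCard v w ≤ borelFiberCard v (w ᵥ* u) := by
  refine Finset.card_le_card_of_injOn (· * u) (fun b hb => ?_)
    (mem_borelFinset.mp hu).1.mul_left_injective.injOn
  simp only [Finset.coe_filter, Set.mem_ofPred_eq] at hb ⊢
  exact ⟨mul_mem_borelFinset hb.1 hu, by rw [← vecMul_vecMul, hb.2]⟩

lemma sum_borelFinset_vecMul {A : Type*} [AddCommMonoid A] (F : (n → R) → A) (v : n → R) :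
    ∑ b ∈ borelFinset R n, F (v ᵥ* b) = ∑ w, borelFiberCard v w • F w := by
  simp only [borelFiberCard, ← Finset.sum_const, Finset.sum_fiberwise']

end Borel

section Vanishing

variable {K n : Type*} [Field K] [Fintype K] [Fintype n] [LinearOrder n] {z x y : n}

lemma borelFiberCard_comp_swap (hzx : z < x) (hxy : x < y) (v : n → K) {w : n → K}
    (hw : Function.Injective w) : borelFiberCard v (w ∘ swap x y) = borelFiberCard v w := by
  have hle : ∀ w : n → K, Function.Injective w →
      borelFiberCard v w ≤ borelFiberCard v (w ∘ swap x y) := fun w hw => by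
    obtain ⟨u, hu, hu', huw⟩ := exists_isUnit_isUpperTriangular_vecMul_eq_comp_swap hzx hxy hw
    exact huw ▸ borelFiberCard_le_borelFiberCard_vecMul v w (mem_borelFinset.mpr ⟨hu, hu'⟩)
  refine le_antisymm ?_ (hle w hw)
  simpa [Function.comp_assoc, ← Perm.coe_mul] using
    hle (w ∘ swap x y) (hw.comp (swap x y).injective)

lemma sum_borelFinset_vecMul_eq_zero {A : Type*} [AddCommGroup A] [IsAddTorsionFree A]
    {F : (n → K) → A} (hF : ∀ w i j, i ≠ j → F (w ∘ swap i j) = -F w)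
    (hzx : z < x) (hxy : x < y) (v : n → K) : ∑ b ∈ borelFinset K n, F (v ᵥ* b) = 0 := by
  have hterm (w : n → K) :
      borelFiberCard v (w ∘ swap x y) • F (w ∘ swap x y) = -(borelFiberCard v w • F w) := by
    by_cases hw : Function.Injective w
    · rw [borelFiberCard_comp_swap hzx hxy v hw, hF w x y hxy.ne, smul_neg]
    · simp [hF w x y hxy.ne, eq_zero_of_comp_swap_eq_neg (hF w) hw]
  rw [sum_borelFinset_vecMul, ← self_eq_neg]
  calc ∑ w, borelFiberCard v w • F w
      = ∑ w : n → K, borelFiberCard v (w ∘ swap x y) • F (w ∘ swap x y) :=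
        (((swap x y).arrowCongr (Equiv.refl K)).sum_comp fun w => borelFiberCard v w • F w).symm
    _ = -∑ w, borelFiberCard v w • F w := by
        rw [← Finset.sum_neg_distrib, Fintype.sum_congr _ _ hterm]

end Vanishing

theorem stmt_14_general {K n : Type*} [Field K] [Fintype K] [Fintype n] [LinearOrder n]
    (hn : 3 ≤ Fintype.card n) (v : n → K) :
    ∑ b : Matrix n n K with IsUnit b ∧ ∀ i j, j < i → b i j = 0,
      ∑ σ : Perm n, (Perm.sign σ : ℤ) •
        (Finsupp.single (v ᵥ* (b * σ.permMatrix K)) 1 : (n → K) →₀ ℤ) = 0 := by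
  let e : Fin 3 ↪o n := Finset.univ.orderEmbOfCardLe hn
  have hzx : e 0 < e 1 := e.strictMono (by decide)
  have hxy : e 1 < e 2 := e.strictMono (by decide)
  simp only [← vecMul_vecMul, sum_sign_smul_single_vecMul_permMatrix]
  rw [← sum_borelFinset_vecMul_eq_zero (fun w _ _ => signedSum_comp_swap w) hzx hxy v]
  refine Finset.sum_congr (Finset.ext fun b => ?_) fun _ _ => rfl
  simp [mem_borelFinset, BlockTriangular]

theorem stmt_14 (p : ℕ) [Fact p.Prime] (s : ℕ) (hs : 3 ≤ s)
    (v : Fin s → ZMod p) :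
    (∑ b ∈ Finset.univ.filter
        (fun b : Matrix (Fin s) (Fin s) (ZMod p) =>
          IsUnit b ∧ ∀ i j, j < i → b i j = 0),
      ∑ σ : Equiv.Perm (Fin s),
        (Equiv.Perm.sign σ : ℤ) •
          (Finsupp.single (Matrix.vecMul v (b * Equiv.Perm.permMatrix (ZMod p) σ)) 1 :
            (Fin s → ZMod p) →₀ ℤ)) = 0 := by
  convert stmt_14_general (by simpa using hs) v
end

section
/- Fix a prime p and let s = 2, with standard basis vectors e₁ = (1,0) and e₂ = (0,1) in (ZMod p)². Then in the free abelian group on the vectors Fin 2 → ZMod p: Σ_{b ∈ B_2} Σ_{σ ∈ Perm(Fin 2)} sign(σ) • [(b · P_σ)ᵀ e₁] = (p−1) • Σ_{c ∈ (ZMod p)ˣ} ([c·e₁] − [c·e₂]), and Σ_{b ∈ B_2} Σ_{σ ∈ Perm(Fin 2)} sign(σ) • [(b · P_σ)ᵀ e₂] = p(p−1) • Σ_{c ∈ (ZMod p)ˣ} ([c·e₂] − [c·e₁]). -/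
open scoped Classical

/-!
Right multiplication by a permutation matrix permutes the coordinates of a row vector, so for
`b = !![a, x; 0, d]` the signed sum over `σ` is `[w] - [swap w]`, where `w` is the row of `b`
selected by the basis vector.

For `e₂` the row is `(0, d)`, and the free choice of `a` and `x` only contributes a multiplicity.
For `e₁` the row is `(a, x)`, and `d` contributes the multiplicity. The sum of `[(a, x)] - [(x, a)]`
over pairs of units `(a, x)` vanishes, since swapping `a` and `x` negates it; only the terms with
`x = 0` survive.
-/

/-- The Borel subgroup of `GL n R`, as the finite set of invertible upper-triangular matrices. -/
noncomputable def borelMatrices (n : ℕ) (R : Type*) [Semiring R] [Fintype R] :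
    Finset (Matrix (Fin n) (Fin n) R) :=
  Finset.univ.filter fun b => IsUnit b ∧ ∀ i j, j < i → b i j = 0

/-- The image of the row vector `v` under the unnormalized Steinberg idempotent
`∑ b ∈ B, ∑ σ, sign σ • b σ`. The formal sum of vectors is evaluated along a function `f` into an
abelian group; `f w = Finsupp.single w 1` gives the sum in the free abelian group. -/
noncomputable def steinbergSum {n : ℕ} {R M : Type*} [Semiring R] [Fintype R] [AddCommGroup M]
    (f : (Fin n → R) → M) (v : Fin n → R) : M :=
  ∑ b ∈ borelMatrices n R, ∑ σ : Equiv.Perm (Fin n),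
    (Equiv.Perm.sign σ : ℤ) • f (Matrix.vecMul v (b * Equiv.Perm.permMatrix R σ))

section Permutations

variable {M : Type*}

lemma sum_perm_fin_two [AddCommMonoid M] (f : Equiv.Perm (Fin 2) → M) :
    ∑ σ, f σ = f 1 + f (Equiv.swap 0 1) := by
  have univ_eq : (Finset.univ : Finset (Equiv.Perm (Fin 2))) = {1, Equiv.swap 0 1} := by decide
  rw [univ_eq, Finset.sum_pair (by decide)]

lemma sum_sign_smul_vecMul_permMatrix {R : Type*} [CommRing R] [AddCommGroup M]
    (f : (Fin 2 → R) → M) (x y : R) :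
    ∑ σ : Equiv.Perm (Fin 2),
        (Equiv.Perm.sign σ : ℤ) • f (Matrix.vecMul ![x, y] (Equiv.Perm.permMatrix R σ)) =
      f ![x, y] - f ![y, x] := by
  have swap_coords : (![x, y] : Fin 2 → R) ∘ Equiv.swap 0 1 = ![y, x] := by
    ext i
    fin_cases i <;> simp
  rw [sum_perm_fin_two, Matrix.permMatrix_one, Matrix.vecMul_one, Matrix.vecMul_permMatrix,
    Equiv.symm_swap, swap_coords, Equiv.Perm.sign_one, Equiv.Perm.sign_swap zero_ne_one]
  simp [sub_eq_add_neg]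

end Permutations

section Borel

variable {R M : Type*} [CommRing R] [Fintype R]

lemma mem_borelMatrices_two_iff {b : Matrix (Fin 2) (Fin 2) R} :
    b ∈ borelMatrices 2 R ↔ ∃ (a : Rˣ) (x : R) (d : Rˣ), !![(a : R), x; 0, (d : R)] = b := by
  have triangular_iff : (∀ i j : Fin 2, j < i → b i j = 0) ↔ b 1 0 = 0 := by
    simp [Fin.forall_fin_two]
  simp only [borelMatrices, Finset.mem_filter, Finset.mem_univ, true_and, triangular_iff,
    Matrix.isUnit_iff_isUnit_det, Matrix.det_fin_two]
  constructor
  · rintro ⟨hdet, hb⟩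
    rw [hb, mul_zero, sub_zero, IsUnit.mul_iff] at hdet
    obtain ⟨⟨a, ha⟩, ⟨d, hd⟩⟩ := hdet
    exact ⟨a, b 0 1, d, by rw [ha, hd, ← hb, ← Matrix.eta_fin_two b]⟩
  · rintro ⟨a, x, d, rfl⟩
    simp

lemma sum_borelMatrices_two [AddCommMonoid M] [Fintype Rˣ] (f : Matrix (Fin 2) (Fin 2) R → M) :
    ∑ b ∈ borelMatrices 2 R, f b =
      ∑ a : Rˣ, ∑ x : R, ∑ d : Rˣ, f !![(a : R), x; 0, (d : R)] := by
  let entries : Rˣ × R × Rˣ → Matrix (Fin 2) (Fin 2) R := fun t => !![↑t.1, t.2.1; 0, ↑t.2.2]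
  have entries_injective : Function.Injective entries := by
    rintro ⟨a, x, d⟩ ⟨a', x', d'⟩ h
    simpa [entries, Units.ext_iff, and_assoc] using h
  have borelMatrices_eq : borelMatrices 2 R = Finset.univ.image entries := by
    ext b
    simp [mem_borelMatrices_two_iff, entries]
  rw [borelMatrices_eq, Finset.sum_image entries_injective.injOn]
  simp only [Fintype.sum_prod_type, entries]

variable [AddCommGroup M] [Fintype Rˣ] (f : (Fin 2 → R) → M)

lemma steinbergSum_fin_two (v : Fin 2 → R) :
    steinbergSum f v = ∑ a : Rˣ, ∑ x : R, ∑ d : Rˣ,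
      (f ![v 0 * a, v 0 * x + v 1 * d] - f ![v 0 * x + v 1 * d, v 0 * a]) := by
  have vecMul_entries (a x d : R) :
      Matrix.vecMul v !![a, x; 0, d] = ![v 0 * a, v 0 * x + v 1 * d] := by
    ext i
    fin_cases i <;> simp [Matrix.vecMul, dotProduct]
  simp only [steinbergSum, sum_borelMatrices_two, ← Matrix.vecMul_vecMul, vecMul_entries,
    sum_sign_smul_vecMul_permMatrix]

lemma steinbergSum_e₂ :
    steinbergSum f ![0, 1] = (Fintype.card R * Fintype.card Rˣ) •
      ∑ c : Rˣ, (f ((c : R) • ![0, 1]) - f ((c : R) • ![1, 0])) := by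
  simp [steinbergSum_fin_two, mul_comm (Fintype.card R), mul_smul, -Finset.sum_sub_distrib]

end Borel

section GroupWithZero

variable {G₀ M : Type*} [GroupWithZero G₀] [Fintype G₀] [Fintype G₀ˣ]

lemma sum_eq_zero_add_sum_units [AddCommMonoid M] (f : G₀ → M) :
    ∑ x, f x = f 0 + ∑ c : G₀ˣ, f c := by
  rw [Fintype.sum_eq_add_sum_subtype_ne f 0, Fintype.sum_equiv unitsEquivNeZero
    (fun c : G₀ˣ => f c) (fun x : {x : G₀ // x ≠ 0} => f x) fun _ => rfl]

lemma sum_units_sum_sub_swap [AddCommGroup M] (g : G₀ → G₀ → M) :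
    ∑ a : G₀ˣ, ∑ x : G₀, (g a x - g x a) = ∑ a : G₀ˣ, (g a 0 - g 0 a) := by
  have unit_pairs_cancel : ∑ a : G₀ˣ, ∑ x : G₀ˣ, (g a x - g x a) = 0 := by
    simp only [Finset.sum_sub_distrib]
    rw [sub_eq_zero, Finset.sum_comm]
  simp only [sum_eq_zero_add_sum_units, Finset.sum_add_distrib, unit_pairs_cancel, add_zero]

end GroupWithZero

section Field

variable {K M : Type*} [Field K] [Fintype K] [Fintype Kˣ] [AddCommGroup M]

lemma steinbergSum_e₁ (f : (Fin 2 → K) → M) :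
    steinbergSum f ![1, 0] = Fintype.card Kˣ •
      ∑ c : Kˣ, (f ((c : K) • ![1, 0]) - f ((c : K) • ![0, 1])) := by
  calc steinbergSum f ![1, 0]
      = Fintype.card Kˣ • ∑ a : Kˣ, ∑ x : K, (f ![↑a, x] - f ![x, ↑a]) := by
        simp [steinbergSum_fin_two, ← Finset.smul_sum, -Finset.sum_sub_distrib]
    _ = Fintype.card Kˣ • ∑ a : Kˣ, (f ![↑a, 0] - f ![0, ↑a]) := by
        rw [sum_units_sum_sub_swap fun a x => f ![a, x]]
    _ = _ := by simp

theorem stmt_15_general (f : (Fin 2 → K) → M) :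
    steinbergSum f ![1, 0] = ((Fintype.card K : ℤ) - 1) •
        ∑ c : Kˣ, (f ((c : K) • ![1, 0]) - f ((c : K) • ![0, 1])) ∧
    steinbergSum f ![0, 1] = ((Fintype.card K : ℤ) * ((Fintype.card K : ℤ) - 1)) •
        ∑ c : Kˣ, (f ((c : K) • ![0, 1]) - f ((c : K) • ![1, 0])) := by
  have card_units : (Fintype.card K : ℤ) - 1 = Fintype.card Kˣ := by
    rw [← Nat.card_eq_fintype_card, Nat.card_eq_card_units_add_one, Nat.card_eq_fintype_card,
      Nat.cast_succ, add_sub_cancel_right]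
  rw [card_units, ← Nat.cast_mul, natCast_zsmul, natCast_zsmul]
  exact ⟨steinbergSum_e₁ f, steinbergSum_e₂ f⟩

end Field

theorem stmt_15 (p : ℕ) [Fact p.Prime] :
    (∑ b ∈ Finset.univ.filter
        (fun b : Matrix (Fin 2) (Fin 2) (ZMod p) =>
          IsUnit b ∧ ∀ i j, j < i → b i j = 0),
      ∑ σ : Equiv.Perm (Fin 2),
        (Equiv.Perm.sign σ : ℤ) •
          (Finsupp.single (Matrix.vecMul ![1, 0] (b * Equiv.Perm.permMatrix (ZMod p) σ)) 1 :
            (Fin 2 → ZMod p) →₀ ℤ)) =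
      ((p : ℤ) - 1) • ∑ c : (ZMod p)ˣ,
        ((Finsupp.single ((c : ZMod p) • ![1, 0]) 1 : (Fin 2 → ZMod p) →₀ ℤ) -
          Finsupp.single ((c : ZMod p) • ![0, 1]) 1) ∧
    (∑ b ∈ Finset.univ.filter
        (fun b : Matrix (Fin 2) (Fin 2) (ZMod p) =>
          IsUnit b ∧ ∀ i j, j < i → b i j = 0),
      ∑ σ : Equiv.Perm (Fin 2),
        (Equiv.Perm.sign σ : ℤ) •
          (Finsupp.single (Matrix.vecMul ![0, 1] (b * Equiv.Perm.permMatrix (ZMod p) σ)) 1 :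
            (Fin 2 → ZMod p) →₀ ℤ)) =
      ((p : ℤ) * ((p : ℤ) - 1)) • ∑ c : (ZMod p)ˣ,
        ((Finsupp.single ((c : ZMod p) • ![0, 1]) 1 : (Fin 2 → ZMod p) →₀ ℤ) -
          Finsupp.single ((c : ZMod p) • ![1, 0]) 1) := by
  have general := stmt_15_general (K := ZMod p) (Finsupp.single · (1 : ℤ))
  simp only [ZMod.card, steinbergSum, borelMatrices] at general
  -- The filters on the two sides carry different decidability instances.
  convert general
end

section
/- Let p be a prime, s ≥ 1 a natural number, and let l be a generator of the cyclic group (ZMod p)ˣ. Then the set of functions c : ((Fin s → ZMod p) → ℤ_p) satisfying Σ_v c(v) = 0 and c(l·v) = c(v) for all v (scalar multiplication of the vector v by the unit l) is a ℤ_p-submodule of the function space which is free of rank (p^s − 1)/(p − 1). -/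
/-!
The scalars `Kˣ` act on the finite vector space `V` with `0` as a fixed point. A function invariant
under the generator `l` is constant on the orbits of `Kˣ`, and the vanishing of its sum determines
its value at `0` from its values on the other orbits, which are arbitrary. So the functions in
question form a free module with one basis element for each orbit other than `{0}`, that is, for
each point of the projective space of `V`.
-/

open MulAction Module
open scoped LinearAlgebra.Projectivization

section GroupAction

variable {R G X : Type*} [Ring R] [Group G] [MulAction G X]

lemma forall_apply_smul_eq_iff_of_generator {Y : Type*} {l : G}
    (hl : ∀ g : G, g ∈ Subgroup.zpowers l) {f : X → Y} :
    (∀ (g : G) (x : X), f (g • x) = f x) ↔ ∀ x, f (l • x) = f x := by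
  refine ⟨fun hf => hf l, fun hf g => ?_⟩
  have hg : g ∈ Subgroup.closure {l} := Subgroup.zpowers_eq_closure l ▸ hl g
  induction hg using Subgroup.closure_induction with
  | mem g hg => simpa [Set.mem_singleton_iff.mp hg] using hf
  | one => simp
  | mul g h _ _ hg hh => intro x; rw [mul_smul, hg, hh]
  | inv g _ hg => intro x; rw [← hg, smul_inv_smul]

lemma mk_eq_mk_iff_of_mem_fixedPoints {x x₀ : X} (hx₀ : x₀ ∈ fixedPoints G X) :
    (Quotient.mk _ x : orbitRel.Quotient G X) = Quotient.mk _ x₀ ↔ x = x₀ := by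
  rw [Quotient.eq, orbitRel_apply]
  exact ⟨mem_fixedPoints'.mp hx₀ x, fun h => h ▸ mem_orbit_self x⟩

lemma single_smul_apply_of_mem_fixedPoints {A : Type*} [Zero A] [DecidableEq X] {x₀ : X}
    (hx₀ : x₀ ∈ fixedPoints G X) (a : A) (g : G) (x : X) :
    (Pi.single x₀ a : X → A) (g • x) = (Pi.single x₀ a : X → A) x := by
  have hg : g • x = x₀ ↔ x = x₀ := by rw [smul_eq_iff_eq_inv_smul, hx₀ g⁻¹]
  simp only [Pi.single_apply, hg]

variable [Fintype X]

variable (R G X) in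
/-- The left `R`-module of functions `X → R` on a finite `G`-set that are invariant under `G` and
whose values add up to zero. -/
def zeroSumInvariants : Submodule R (X → R) where
  carrier := {c | ∑ x, c x = 0 ∧ ∀ (g : G) (x : X), c (g • x) = c x}
  zero_mem' := by simp
  add_mem' := fun ha hb =>
    ⟨by simp [Finset.sum_add_distrib, ha.1, hb.1], fun g x => by simp [ha.2 g x, hb.2 g x]⟩
  smul_mem' := fun r _ ha =>
    ⟨by simp [← Finset.mul_sum, ha.1], fun g x => by simp [ha.2 g x]⟩

lemma mem_zeroSumInvariants {c : X → R} :
    c ∈ zeroSumInvariants R G X ↔ ∑ x, c x = 0 ∧ ∀ (g : G) (x : X), c (g • x) = c x :=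
  Iff.rfl

lemma apply_out_of_mem_zeroSumInvariants {c : X → R} (hc : c ∈ zeroSumInvariants R G X) (x : X) :
    c (Quotient.mk _ x : orbitRel.Quotient G X).out = c x := by
  obtain ⟨g, hg⟩ := orbitRel_apply.mp (Quotient.mk_out (s := orbitRel G X) x)
  rw [← hg]
  exact hc.2 g x

variable (R G) in
/-- Restriction of zero-sum invariant functions to the orbits other than that of `x₀`, the value on
an orbit being read off at a chosen representative. -/
noncomputable def restrictOrbits (x₀ : X) :
    zeroSumInvariants R G X →ₗ[R] ({ω : orbitRel.Quotient G X // ω ≠ Quotient.mk _ x₀} → R) :=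
  LinearMap.funLeft R R (fun ω => ω.1.out) ∘ₗ (zeroSumInvariants R G X).subtype

lemma restrictOrbits_injective {x₀ : X} (hx₀ : x₀ ∈ fixedPoints G X) :
    Function.Injective (restrictOrbits R G x₀) := by
  refine (injective_iff_map_eq_zero _).mpr fun ⟨c, hc⟩ hzero => Subtype.ext (funext fun x => ?_)
  have off_fixed (y : X) (hy : y ≠ x₀) : c y = 0 := by
    rw [← apply_out_of_mem_zeroSumInvariants hc y]
    exact congrFun hzero ⟨Quotient.mk _ y, (mk_eq_mk_iff_of_mem_fixedPoints hx₀).not.mpr hy⟩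
  have at_fixed : c x₀ = 0 := by
    rw [← Fintype.sum_eq_single x₀ off_fixed, hc.1]
  obtain rfl | hx := eq_or_ne x x₀
  exacts [at_fixed, off_fixed x hx]

lemma restrictOrbits_surjective {x₀ : X} (hx₀ : x₀ ∈ fixedPoints G X) :
    Function.Surjective (restrictOrbits R G x₀) := by
  classical
  intro d
  let b : X → R := fun x => Function.extend Subtype.val d 0 (Quotient.mk (orbitRel G X) x)
  have b_smul (g : G) (x : X) : b (g • x) = b x :=
    congrArg (Function.extend Subtype.val d 0) (Quotient.sound (mem_orbit x g))
  let c : X → R := b - Pi.single x₀ (∑ x, b x)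
  have hc : c ∈ zeroSumInvariants R G X :=
    ⟨by simp [c], fun g x => by
      simp only [c, Pi.sub_apply, b_smul, single_smul_apply_of_mem_fixedPoints hx₀]⟩
  refine ⟨⟨c, hc⟩, funext fun ω => ?_⟩
  have out_ne : ω.1.out ≠ x₀ := fun h =>
    ω.2 ((Quotient.out_eq ω.1).symm.trans (congrArg (Quotient.mk _) h))
  calc c ω.1.out = b ω.1.out := by simp [c, out_ne]
    _ = Function.extend Subtype.val d 0 ω.1 := by simp only [b, Quotient.out_eq]
    _ = d ω := Subtype.val_injective.extend_apply d 0 ω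

variable (R) in
/-- For a fixed point `x₀`, restriction identifies the zero-sum invariant functions with all
functions on the orbits other than `{x₀}`: the value at `x₀` is minus the sum of the others. -/
noncomputable def zeroSumInvariantsEquiv {x₀ : X} (hx₀ : x₀ ∈ fixedPoints G X) :
    zeroSumInvariants R G X ≃ₗ[R]
      ({ω : orbitRel.Quotient G X // ω ≠ Quotient.mk _ x₀} → R) :=
  LinearEquiv.ofBijective (restrictOrbits R G x₀)
    ⟨restrictOrbits_injective hx₀, restrictOrbits_surjective hx₀⟩

lemma free_zeroSumInvariants {x₀ : X} (hx₀ : x₀ ∈ fixedPoints G X) :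
    Module.Free R (zeroSumInvariants R G X) :=
  .of_equiv (zeroSumInvariantsEquiv R hx₀).symm

lemma finrank_zeroSumInvariants [StrongRankCondition R] {x₀ : X} (hx₀ : x₀ ∈ fixedPoints G X) :
    finrank R (zeroSumInvariants R G X) =
      Nat.card {ω : orbitRel.Quotient G X // ω ≠ Quotient.mk _ x₀} := by
  have := Fintype.ofFinite {ω : orbitRel.Quotient G X // ω ≠ Quotient.mk _ x₀}
  rw [(zeroSumInvariantsEquiv R hx₀).finrank_eq, finrank_fintype_fun_eq_card,
    Nat.card_eq_fintype_card]

end GroupAction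

section Scalars

lemma zero_mem_fixedPoints (M A : Type*) [Monoid M] [AddMonoid A] [DistribMulAction M A] :
    (0 : A) ∈ fixedPoints M A :=
  smul_zero

variable (K V : Type*) [DivisionRing K] [AddCommGroup V] [Module K V]

/-- The points of projective space are the orbits of nonzero vectors under the scalars. -/
def orbitsNeZeroEquivProjectivization :
    {ω : orbitRel.Quotient Kˣ V // ω ≠ Quotient.mk _ 0} ≃ ℙ K V :=
  Equiv.subtypeQuotientEquivQuotientSubtype (· ≠ 0) (· ≠ Quotient.mk _ 0)
    (fun _ => (mk_eq_mk_iff_of_mem_fixedPoints (zero_mem_fixedPoints Kˣ V)).not.symm)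
    (fun _ _ => Iff.rfl)

end Scalars

theorem stmt_16_general {K V R : Type*} [Field K] [Finite K] [AddCommGroup V] [Module K V]
    [Fintype V] [Ring R] [StrongRankCondition R] (l : Kˣ)
    (hl : ∀ u : Kˣ, u ∈ Subgroup.zpowers l) :
    ∃ S : Submodule R (V → R),
      (∀ c : V → R, c ∈ S ↔ ((∑ v, c v) = 0 ∧ ∀ v, c ((l : K) • v) = c v)) ∧
      Module.Free R S ∧
      finrank R S = (Nat.card V - 1) / (Nat.card K - 1) := by
  have h0 := zero_mem_fixedPoints Kˣ V
  refine ⟨zeroSumInvariants R Kˣ V, fun c => ?_, free_zeroSumInvariants h0, ?_⟩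
  · rw [mem_zeroSumInvariants, forall_apply_smul_eq_iff_of_generator hl]
    rfl
  · rw [finrank_zeroSumInvariants h0, Nat.card_congr (orbitsNeZeroEquivProjectivization K V),
      Projectivization.card'']

theorem stmt_16 (p : ℕ) [Fact p.Prime] (s : ℕ) (hs : 1 ≤ s) (l : (ZMod p)ˣ)
    (hl : ∀ u : (ZMod p)ˣ, u ∈ Subgroup.zpowers l) :
    ∃ S : Submodule ℤ_[p] ((Fin s → ZMod p) → ℤ_[p]),
      (∀ c : (Fin s → ZMod p) → ℤ_[p],
        c ∈ S ↔ ((∑ v : Fin s → ZMod p, c v) = 0 ∧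
          ∀ v : Fin s → ZMod p, c ((l : ZMod p) • v) = c v)) ∧
      Module.Free ℤ_[p] S ∧
      Module.finrank ℤ_[p] S = (p ^ s - 1) / (p - 1) := by
  simpa using stmt_16_general (V := Fin s → ZMod p) (R := ℤ_[p]) l hl
end

section
/- Let p be an odd prime and let l ∈ ℤ_pˣ be a topological generator of the unit group of the p-adic integers (i.e. the subgroup generated by l is dense in ℤ_pˣ). Then for every natural number i ≥ 1: if (p−1) does not divide i, the element 1 − l^i is a unit in ℤ_p; and if (p−1) divides i, the p-adic valuation of 1 − l^i equals ν_p(i) + 1, where ν_p(i) is the exponent of the largest power of p dividing i. -/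
/-!
Reduction `ℤ_pˣ → (ℤ/pⁿ)ˣ` is continuous and surjective onto a discrete group, so it maps a dense
subgroup onto the whole target. The image of `l` therefore has order `φ(pⁿ)`, which means that
`pⁿ ∣ 1 - lⁱ` exactly when `φ(pⁿ) ∣ i`. Since `φ(pⁿ⁺¹) = pⁿ(p - 1)` with coprime factors, these
divisibilities decide whether `1 - lⁱ` is a unit and, when `p - 1 ∣ i`, determine its valuation.
-/

theorem map_eq_top_of_dense {G H : Type*} [Group G] [TopologicalSpace G] [Group H]
    [TopologicalSpace H] [DiscreteTopology H] {f : G →* H} (hf : Continuous f)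
    (hf_surj : Function.Surjective f) {K : Subgroup G} (hK : Dense (K : Set G)) :
    K.map f = ⊤ :=
  SetLike.coe_injective <| dense_discrete.1 <| hf_surj.denseRange.dense_image hf hK

theorem units_map_surjective_of_surjective {R S : Type*} [CommRing R] [IsLocalRing R] [CommRing S]
    {f : R →+* S} (hf : Function.Surjective f) :
    Function.Surjective (Units.map (f : R →* S)) := by
  cases subsingleton_or_nontrivial S
  · exact Function.surjective_to_subsingleton _
  · exact IsLocalRing.surjective_units_map_of_local_ringHom f hf (.of_surjective f hf)

theorem totient_prime_pow_succ_dvd_iff_le_padicValNat {p i : ℕ} [hp : Fact p.Prime] (hi : i ≠ 0)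
    (hpi : p - 1 ∣ i) (n : ℕ) : (p ^ (n + 1)).totient ∣ i ↔ n ≤ padicValNat p i := by
  have hcop : (p ^ n).Coprime (p - 1) :=
    ((Nat.coprime_self_sub_right hp.out.one_le).2 (Nat.coprime_one_right p)).pow_left n
  rw [Nat.totient_prime_pow_succ hp.out, ← padicValNat_dvd_iff_le hi]
  exact ⟨dvd_of_mul_right_dvd, fun hpow => hcop.mul_dvd_of_dvd_of_dvd hpow hpi⟩

section PadicIntegers

variable {p : ℕ} [Fact p.Prime]

theorem padicInt_isUnit_iff_not_dvd {x : ℤ_[p]} : IsUnit x ↔ ¬ (p : ℤ_[p]) ∣ x := by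
  rw [← PadicInt.norm_lt_one_iff_dvd, ← PadicInt.not_isUnit_iff, not_not]

theorem padicInt_valuation_eq_of_pow_dvd_of_not_pow_succ_dvd {x : ℤ_[p]} {n : ℕ}
    (hdvd : (p : ℤ_[p]) ^ n ∣ x) (hndvd : ¬ (p : ℤ_[p]) ^ (n + 1) ∣ x) : x.valuation = n := by
  have hx : x ≠ 0 := fun hx => hndvd (hx ▸ dvd_zero _)
  rw [← Ideal.mem_span_singleton, PadicInt.mem_span_pow_iff_le_valuation x hx] at hdvd hndvd
  omega

theorem toZModPow_eq_toZModPow_iff_pow_dvd_sub {n : ℕ} {x y : ℤ_[p]} :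
    PadicInt.toZModPow n x = PadicInt.toZModPow n y ↔ (p : ℤ_[p]) ^ n ∣ x - y := by
  rw [← RingHom.sub_mem_ker_iff, PadicInt.ker_toZModPow, Ideal.mem_span_singleton]

theorem continuous_toZModPow (n : ℕ) : Continuous (PadicInt.toZModPow (p := p) n) := by
  refine continuous_of_continuousAt_zero _ ?_
  rw [ContinuousAt, map_zero, nhds_discrete (ZMod _), Filter.tendsto_pure]
  have hr : (0 : ℝ) < (p : ℝ) ^ (-n : ℤ) :=
    zpow_pos (Nat.cast_pos.2 (Fact.out : p.Prime).pos) _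
  filter_upwards [Metric.closedBall_mem_nhds (0 : ℤ_[p]) hr] with x hx
  rwa [← RingHom.mem_ker, PadicInt.ker_toZModPow, ← PadicInt.norm_le_pow_iff_mem_span_pow,
    ← mem_closedBall_zero_iff]

theorem pow_dvd_one_sub_pow_iff_orderOf_dvd (u : ℤ_[p]ˣ) (n i : ℕ) :
    (p : ℤ_[p]) ^ n ∣ 1 - (u : ℤ_[p]) ^ i ↔
      orderOf (Units.map (PadicInt.toZModPow (p := p) n : ℤ_[p] →* ZMod (p ^ n)) u) ∣ i := by
  rw [orderOf_dvd_iff_pow_eq_one, ← map_pow, Units.ext_iff, Units.coe_map, Units.val_one,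
    Units.val_pow_eq_pow_val, MonoidHom.coe_coe, ← map_one (PadicInt.toZModPow n), eq_comm,
    toZModPow_eq_toZModPow_iff_pow_dvd_sub]

theorem orderOf_units_map_toZModPow_of_dense_zpowers {l : ℤ_[p]ˣ}
    (hl : Dense (Subgroup.zpowers l : Set ℤ_[p]ˣ)) (n : ℕ) :
    orderOf (Units.map (PadicInt.toZModPow (p := p) n : ℤ_[p] →* ZMod (p ^ n)) l) =
      (p ^ n).totient := by
  have hgen : Subgroup.zpowers
      (Units.map (PadicInt.toZModPow (p := p) n : ℤ_[p] →* ZMod (p ^ n)) l) = ⊤ := by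
    rw [← MonoidHom.map_zpowers]
    have hsurj : Function.Surjective (PadicInt.toZModPow (p := p) n) := ZMod.ringHom_surjective _
    exact map_eq_top_of_dense ((continuous_toZModPow n).units_map _)
      (units_map_surjective_of_surjective hsurj) hl
  rw [orderOf_eq_card_of_zpowers_eq_top hgen, Nat.card_eq_fintype_card,
    ZMod.card_units_eq_totient]

theorem pow_dvd_one_sub_pow_iff_totient_dvd_of_dense_zpowers {l : ℤ_[p]ˣ}
    (hl : Dense (Subgroup.zpowers l : Set ℤ_[p]ˣ)) (n i : ℕ) :
    (p : ℤ_[p]) ^ n ∣ 1 - (l : ℤ_[p]) ^ i ↔ (p ^ n).totient ∣ i := by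
  rw [pow_dvd_one_sub_pow_iff_orderOf_dvd, orderOf_units_map_toZModPow_of_dense_zpowers hl]

theorem isUnit_one_sub_pow_iff_of_dense_zpowers {l : ℤ_[p]ˣ}
    (hl : Dense (Subgroup.zpowers l : Set ℤ_[p]ˣ)) (i : ℕ) :
    IsUnit (1 - (l : ℤ_[p]) ^ i) ↔ ¬ (p - 1) ∣ i := by
  rw [padicInt_isUnit_iff_not_dvd, ← Nat.totient_prime Fact.out]
  simpa only [pow_one] using (pow_dvd_one_sub_pow_iff_totient_dvd_of_dense_zpowers hl 1 i).not

theorem valuation_one_sub_pow_of_dense_zpowers {l : ℤ_[p]ˣ}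
    (hl : Dense (Subgroup.zpowers l : Set ℤ_[p]ˣ)) {i : ℕ} (hi : i ≠ 0)
    (hpi : p - 1 ∣ i) :
    (1 - (l : ℤ_[p]) ^ i).valuation = padicValNat p i + 1 := by
  have hdvd_iff (n : ℕ) : (p : ℤ_[p]) ^ (n + 1) ∣ 1 - (l : ℤ_[p]) ^ i ↔ n ≤ padicValNat p i := by
    rw [pow_dvd_one_sub_pow_iff_totient_dvd_of_dense_zpowers hl,
      totient_prime_pow_succ_dvd_iff_le_padicValNat hi hpi]
  exact padicInt_valuation_eq_of_pow_dvd_of_not_pow_succ_dvd ((hdvd_iff _).2 le_rfl)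
    ((hdvd_iff _).not.2 (Nat.not_succ_le_self _))

end PadicIntegers

theorem stmt_17 (p : ℕ) [Fact p.Prime] (hp : Odd p) (l : ℤ_[p]ˣ)
    (hl : Dense ((Subgroup.zpowers l : Subgroup ℤ_[p]ˣ) : Set ℤ_[p]ˣ)) :
    ∀ i : ℕ, 1 ≤ i →
      (¬ (p - 1) ∣ i → IsUnit ((1 : ℤ_[p]) - (l : ℤ_[p]) ^ i)) ∧
      ((p - 1) ∣ i →
        ((1 : ℤ_[p]) - (l : ℤ_[p]) ^ i).valuation = (padicValNat p i : ℤ) + 1) := by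
  intro i hi
  refine ⟨(isUnit_one_sub_pow_iff_of_dense_zpowers hl i).2, fun hpi => ?_⟩
  exact_mod_cast valuation_one_sub_pow_of_dense_zpowers hl (Nat.one_le_iff_ne_zero.1 hi) hpi
end
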